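/- Let p ∈ (1,∞). For every constant c ≥ 0 there exists a constant C_{p,c} > 0 such that for all n ∈ ℕ and all σ ∈ {0,1}^n with |2a_n − n| ≤ c√n (where a_n = #{j : σ_j = 0}), the Haar coefficients μ_{j,m} of the local discrepancy of R_{n,σ} (with N = 2^n points) satisfy Σ_{j ∈ ℕ_{−1}^2} 2^{2|j|} ‖ Σ_{m ∈ D_j} μ_{j,m}² 1_{I_{j,m}} ‖_{L_{p/2}} ≤ C_{p,c} · n/2^{2n}. -/

import Mathlib

open MeasureTheory

/-- The real value of a binary digit. -/
noncomputable def bval (b : Bool) : ℝ := if b then 1 else 0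

/-- The two-dimensional digit shifted Hammersley point set with `2^n` points,
indexed by the digit vectors `t : Fin n → Bool`.  The index `i : Fin n`
corresponds to the digit `t_{i+1}` of the paper. -/
noncomputable def hammersleyShifted (n : ℕ) (σ : Fin n → Bool) (t : Fin n → Bool) : ℝ × ℝ :=
  (∑ i : Fin n, bval (t i) / 2 ^ (n - i.val),
   ∑ i : Fin n, bval (t i != σ i) / 2 ^ (i.val + 1))

/-- Number of points of the (indexed) point set `P` lying in `[0,t₁) × [0,t₂)`. -/
noncomputable def countIn {ι : Type*} [Fintype ι] (P : ι → ℝ × ℝ) (t : ℝ × ℝ) : ℕ :=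
  (Finset.univ.filter
    (fun k => 0 ≤ (P k).1 ∧ (P k).1 < t.1 ∧ 0 ≤ (P k).2 ∧ (P k).2 < t.2)).card

/-- The local discrepancy `D_N(P,t) = A_N([0,t),P)/N - t₁t₂` of an indexed point set. -/
noncomputable def localDisc {ι : Type*} [Fintype ι] (P : ι → ℝ × ℝ) (t : ℝ × ℝ) : ℝ :=
  (countIn P t : ℝ) / (Fintype.card ι) - t.1 * t.2

/-- The `L_p`-discrepancy of an indexed point set. -/
noncomputable def LpDisc (p : ℝ) {ι : Type*} [Fintype ι] (P : ι → ℝ × ℝ) : ℝ :=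
  (∫ t in Set.Icc (0 : ℝ × ℝ) 1, |localDisc P t| ^ p) ^ (1 / p)

/-- One-dimensional `L∞`-normalized Haar function `h_{j,m}`, with `j ∈ ℤ`, `j = -1`
giving the indicator of `[0,1)` and `j ≥ 0` the usual Haar function on `I_{j,m}`. -/
noncomputable def haar1 (j : ℤ) (m : ℕ) (x : ℝ) : ℝ :=
  if j = -1 then (if 0 ≤ x ∧ x < 1 then 1 else 0)
  else if (2 * m : ℝ) / 2 ^ (j.toNat + 1) ≤ x ∧ x < (2 * m + 1 : ℝ) / 2 ^ (j.toNat + 1) then 1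
  else if (2 * m + 1 : ℝ) / 2 ^ (j.toNat + 1) ≤ x ∧ x < (2 * m + 2 : ℝ) / 2 ^ (j.toNat + 1) then -1
  else 0

/-- Two-dimensional (tensor product) Haar function. -/
noncomputable def haar2 (j : ℤ × ℤ) (m : ℕ × ℕ) (x : ℝ × ℝ) : ℝ :=
  haar1 j.1 m.1 x.1 * haar1 j.2 m.2 x.2

/-- One-dimensional dyadic interval `I_{j,m}` (with `I_{-1,0} = [0,1)`). -/
noncomputable def dyadicI (j : ℤ) (m : ℕ) : Set ℝ :=
  if j = -1 then Set.Ico (0 : ℝ) 1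
  else Set.Ico ((m : ℝ) / 2 ^ j.toNat) ((m + 1 : ℝ) / 2 ^ j.toNat)

/-- Haar coefficient `μ_{j,m} = ∫_{[0,1]²} D_N(P,t) h_{j,m}(t) dt` of the local
discrepancy of an indexed point set. -/
noncomputable def haarCoeff {ι : Type*} [Fintype ι] (P : ι → ℝ × ℝ) (j : ℤ × ℤ) (m : ℕ × ℕ) : ℝ :=
  ∫ t in Set.Icc (0 : ℝ × ℝ) 1, localDisc P t * haar2 j m t

/-- Number of zero components of the shift `σ`. -/
noncomputable def zeroCount {n : ℕ} (σ : Fin n → Bool) : ℕ :=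
  (Finset.univ.filter (fun j => σ j = false)).card

/-- The symmetrized digit shifted Hammersley point set `R_{n,σ} ∪ R_{n,σ⊕1}`
with `2^(n+1)` points, indexed by `Bool × (Fin n → Bool)`. -/
noncomputable def hammersleySym (n : ℕ) (σ : Fin n → Bool) :
    Bool × (Fin n → Bool) → ℝ × ℝ :=
  fun bt => if bt.1 then hammersleyShifted n (fun i => !(σ i)) bt.2
            else hammersleyShifted n σ bt.2

/-- The multiset `R_{n,σ} ∪ {(x, 1-y) : (x,y) ∈ R_{n,σ}}` with `2^(n+1)` points
(counted with multiplicity), indexed by `Bool × (Fin n → Bool)`. -/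
noncomputable def hammersleySymTilde (n : ℕ) (σ : Fin n → Bool) :
    Bool × (Fin n → Bool) → ℝ × ℝ :=
  fun bt => if bt.1 then ((hammersleyShifted n σ bt.2).1, 1 - (hammersleyShifted n σ bt.2).2)
            else hammersleyShifted n σ bt.2

/-- The summand `2^{2|j|} ‖ Σ_{m ∈ D_j} μ_{j,m}² 1_{I_{j,m}} ‖_{L_{p/2}}` for a fixed
shape `j ∈ ℕ_{-1}²`, where `‖g‖_{L_{p/2}} = (∫ |g|^{p/2})^{2/p}` on `[0,1]²`. -/
noncomputable def lpHalfTerm (p : ℝ) {ι : Type*} [Fintype ι] (P : ι → ℝ × ℝ)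
    (j : ℤ × ℤ) : ℝ :=
  2 ^ (2 * (j.1.toNat + j.2.toNat)) *
    (∫ x in Set.Icc (0 : ℝ × ℝ) 1,
        |∑ m1 ∈ Finset.range (2 ^ j.1.toNat), ∑ m2 ∈ Finset.range (2 ^ j.2.toNat),
            haarCoeff P j (m1, m2) ^ 2 *
              Set.indicator (dyadicI j.1 m1 ×ˢ dyadicI j.2 m2) (fun _ => (1 : ℝ)) x| ^
          (p / 2)) ^ (2 / p)


/-- sum over points -/
noncomputable def hS (n : ℕ) (σ : Fin n → Bool) (f g : ℝ → ℝ) : ℝ :=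
  ∑ t : Fin n → Bool, f (hammersleyShifted n σ t).1 * g (hammersleyShifted n σ t).2

lemma bval_nonneg (b : Bool) : 0 ≤ bval b := by cases b <;> simp [bval]

lemma bval_le (b : Bool) : bval b ≤ 1 := by cases b <;> simp [bval]

lemma bval_true : bval true = 1 := by simp [bval]

lemma bval_false : bval false = 0 := by simp [bval]

lemma hx_cons (n : ℕ) (σ : Fin (n+1) → Bool) (b : Bool) (t : Fin n → Bool) :
    (hammersleyShifted (n+1) σ (Fin.cons b t)).1 =
      (hammersleyShifted n (Fin.tail σ) t).1 + bval b / 2^(n+1) := by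
  simp only [hammersleyShifted]
  rw [Fin.sum_univ_succ]
  simp [add_comm]

lemma hy_cons (n : ℕ) (σ : Fin (n+1) → Bool) (b : Bool) (t : Fin n → Bool) :
    (hammersleyShifted (n+1) σ (Fin.cons b t)).2 =
      ((hammersleyShifted n (Fin.tail σ) t).2 + bval (b != σ 0)) / 2 := by
  simp only [hammersleyShifted]
  rw [Fin.sum_univ_succ]
  simp only [Fin.cons_zero, Fin.cons_succ, Fin.val_succ, Fin.tail, Fin.val_zero, add_div, Finset.sum_div]
  rw [add_comm]
  congr 1
  · refine Finset.sum_congr rfl fun i _ => ?_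
    rw [div_div, ← pow_succ]
  · simp

lemma sum_cons (n : ℕ) (F : (Fin (n+1) → Bool) → ℝ) :
    ∑ t, F t = ∑ b : Bool, ∑ t : Fin n → Bool, F (Fin.cons b t) := by
  rw [← (Fin.consEquiv (fun _ : Fin (n+1) => Bool)).sum_comp, Fintype.sum_prod_type]
  rfl

lemma hS_cons (n : ℕ) (σ : Fin (n+1) → Bool) (f g : ℝ → ℝ) :
    hS (n+1) σ f g = ∑ b : Bool, hS n (Fin.tail σ) (fun x => f (x + bval b / 2^(n+1)))
      (fun y => g ((y + bval (b != σ 0)) / 2)) := by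
  unfold hS
  rw [sum_cons]
  simp only [hx_cons, hy_cons]

/-- digit reversal -/
def revE (n : ℕ) (σ : Fin n → Bool) : (Fin n → Bool) ≃ (Fin n → Bool) where
  toFun t := fun i => (t i.rev != σ i.rev)
  invFun t := fun i => (t i.rev != σ i)
  left_inv t := by ext i; simp
  right_inv t := by ext i; simp

lemma hx_rev (n : ℕ) (σ : Fin n → Bool) (t : Fin n → Bool) :
    (hammersleyShifted n (fun i => σ i.rev) (revE n σ t)).1 = (hammersleyShifted n σ t).2 := by
  simp only [hammersleyShifted, revE, Equiv.coe_fn_mk]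
  rw [← Equiv.sum_comp Fin.revPerm]
  refine Finset.sum_congr rfl fun i _ => ?_
  simp only [Fin.revPerm_apply, Fin.rev_rev, Fin.val_rev]
  congr 2
  omega

lemma hy_rev (n : ℕ) (σ : Fin n → Bool) (t : Fin n → Bool) :
    (hammersleyShifted n (fun i => σ i.rev) (revE n σ t)).2 = (hammersleyShifted n σ t).1 := by
  simp only [hammersleyShifted, revE, Equiv.coe_fn_mk]
  rw [← Equiv.sum_comp Fin.revPerm]
  refine Finset.sum_congr rfl fun i _ => ?_
  simp only [Fin.revPerm_apply, Fin.rev_rev, Fin.val_rev]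
  congr 2
  · simp
  · omega

lemma hS_swap (n : ℕ) (σ : Fin n → Bool) (f g : ℝ → ℝ) :
    hS n σ f g = hS n (fun i => σ i.rev) g f := by
  unfold hS
  rw [← (revE n σ).sum_comp (fun t => g _ * f _)]
  simp only [hx_rev, hy_rev, mul_comm]

lemma hy_range (n : ℕ) (σ : Fin n → Bool) (t : Fin n → Bool) :
    0 ≤ (hammersleyShifted n σ t).2 ∧ (hammersleyShifted n σ t).2 + 1 / 2^n ≤ 1 := by
  induction n with
  | zero => simp [hammersleyShifted]
  | succ n ih =>
    obtain ⟨h1, h2⟩ := ih (Fin.tail σ) (Fin.tail t)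
    have := hy_cons n σ (t 0) (Fin.tail t)
    rw [Fin.cons_self_tail] at this
    rw [this, pow_succ]
    have a := bval_nonneg (t 0 != σ 0)
    have b := bval_le (t 0 != σ 0)
    have e : (1:ℝ) / (2^n*2) = (1/2^n)/2 := by field_simp
    rw [e]
    constructor <;> linarith

lemma hx_range (n : ℕ) (σ : Fin n → Bool) (t : Fin n → Bool) :
    0 ≤ (hammersleyShifted n σ t).1 ∧ (hammersleyShifted n σ t).1 + 1 / 2^n ≤ 1 := by
  rw [← hy_rev]; exact hy_range _ _ _

lemma hy_int (n : ℕ) (σ : Fin n → Bool) (t : Fin n → Bool) (j : ℕ) (hj : n ≤ j) :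
    ∃ z : ℤ, (hammersleyShifted n σ t).2 * 2^j = z := by
  refine ⟨∑ i : Fin n, (if (t i != σ i) then 1 else 0) * 2^(j - (i.val+1)), ?_⟩
  simp only [hammersleyShifted, Finset.sum_mul]
  push_cast
  refine Finset.sum_congr rfl fun i _ => ?_
  have : (2:ℝ)^j = 2^(j - (i.val+1)) * 2^(i.val+1) := by
    rw [← pow_add]; congr 1; omega
  rw [this, bval]
  field_simp

lemma hx_int (n : ℕ) (σ : Fin n → Bool) (t : Fin n → Bool) (j : ℕ) (hj : n ≤ j) :
    ∃ z : ℤ, (hammersleyShifted n σ t).1 * 2^j = z := by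
  rw [← hy_rev]; exact hy_int _ _ _ _ hj

/-- tent -/
noncomputable def tau (u : ℝ) : ℝ := max 0 (min u (1 - u))

/-- scaled tent -/
noncomputable def tent (j m : ℕ) (z : ℝ) : ℝ := tau (z * 2^j - m) / 2^j

lemma tau_nonneg (u : ℝ) : 0 ≤ tau u := le_max_left _ _
lemma tau_le (u : ℝ) : tau u ≤ 1/2 := by
  unfold tau
  refine max_le (by norm_num) ?_
  rcases le_total u (1/2) with h | h
  · exact (min_le_left _ _).trans h
  · exact (min_le_right _ _).trans (by linarith)
lemma tau_lo {u : ℝ} (h : 0 ≤ u) (h' : u ≤ 1/2) : tau u = u := by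
  unfold tau; rw [min_eq_left (by linarith), max_eq_right h]
lemma tau_hi {u : ℝ} (h : 1/2 ≤ u) (h' : u ≤ 1) : tau u = 1 - u := by
  unfold tau; rw [min_eq_right (by linarith), max_eq_right (by linarith)]
lemma tau_neg {u : ℝ} (h : u ≤ 0) : tau u = 0 := by
  unfold tau; exact max_eq_left ((min_le_left _ _).trans h)
lemma tau_big {u : ℝ} (h : 1 ≤ u) : tau u = 0 := by
  unfold tau; exact max_eq_left ((min_le_right _ _).trans (by linarith))

lemma tent_nonneg (j m : ℕ) (z : ℝ) : 0 ≤ tent j m z := div_nonneg (tau_nonneg _) (by positivity)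
lemma tent_le (j m : ℕ) (z : ℝ) : tent j m z ≤ 1/2/2^j := by
  unfold tent; gcongr; exact tau_le _

lemma tent_int (j m : ℕ) (z : ℝ) (h : ∃ k : ℤ, z * 2^j = k) : tent j m z = 0 := by
  obtain ⟨k, hk⟩ := h
  unfold tent
  rw [hk]
  rcases le_or_gt k m with h | h
  · rw [tau_neg, zero_div]
    have : (k:ℝ) ≤ m := by exact_mod_cast h
    linarith
  · rw [tau_big, zero_div]
    have : (m:ℝ) + 1 ≤ k := by exact_mod_cast h
    linarith

/-- for any level `j+1` index there is a distinguished top bit `b` and remainder -/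
lemma tent_step (j m : ℕ) (hm : m < 2^(j+1)) : ∃ (b : Bool) (m' : ℕ), m' < 2^j ∧
    ∀ u : ℝ, 0 ≤ u → u ≤ 1 → tent (j+1) m ((u + bval b)/2) = tent j m' u / 2 ∧
      tent (j+1) m ((u + bval (!b))/2) = 0 := by
  rcases lt_or_ge m (2^j) with h | h
  · refine ⟨false, m, h, fun u h0 h1 => ⟨?_, ?_⟩⟩
    · unfold tent
      rw [bval_false, pow_succ, div_div]
      congr 2
      ring
    · unfold tent
      rw [tau_big, zero_div]
      simp only [Bool.not_false, bval_true]
      have : (m:ℝ) + 1 ≤ 2^j := by exact_mod_cast h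
      have h2 : (0:ℝ) < 2^j := by positivity
      rw [pow_succ]
      nlinarith
  · refine ⟨true, m - 2^j, by rw [pow_succ] at hm; omega, fun u h0 h1 => ⟨?_, ?_⟩⟩
    · unfold tent
      rw [bval_true, pow_succ, div_div, Nat.cast_sub h]
      push_cast
      congr 2
      ring
    · unfold tent
      rw [tau_neg, zero_div]
      simp only [Bool.not_true, bval_false]
      have : (2:ℝ)^j ≤ m := by exact_mod_cast h
      have h2 : (0:ℝ) < 2^j := by positivity
      rw [pow_succ]
      nlinarith

lemma hS_congr (n : ℕ) (σ : Fin n → Bool) (f g f' g' : ℝ → ℝ)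
    (h : ∀ x y, 0 ≤ x → x + 1/2^n ≤ 1 → 0 ≤ y → y + 1/2^n ≤ 1 → f x * g y = f' x * g' y) :
    hS n σ f g = hS n σ f' g' := by
  unfold hS
  refine Finset.sum_congr rfl fun t _ => ?_
  exact h _ _ (hx_range n σ t).1 (hx_range n σ t).2 (hy_range n σ t).1 (hy_range n σ t).2

/-- recursion in the second coordinate -/
lemma hS_step (j m : ℕ) (hm : m < 2^(j+1)) (n : ℕ) (σ : Fin (n+1) → Bool) (ε' : ℝ)
    (h0 : 0 ≤ ε') (h1 : ε' ≤ 1/2^(n+1)) :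
    ∃ (δ : ℝ) (m' : ℕ) , (0 ≤ δ ∧ δ ≤ 1/2^(n+1)) ∧ m' < 2^j ∧ ∀ f : ℝ → ℝ,
      hS (n+1) σ f (fun y => tent (j+1) m (y + ε')) =
      hS n (Fin.tail σ) (fun x => f (x + δ)) (fun y => tent j m' (y + 2 * ε')) / 2 := by
  obtain ⟨b, m', hm', H⟩ := tent_step j m hm
  have e2 : (1:ℝ)/2^(n+1) = 1/2^n/2 := by rw [pow_succ]; field_simp
  refine ⟨bval (b != σ 0) / 2^(n+1), m', ⟨?_, ?_⟩, hm', fun f => ?_⟩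
  · exact div_nonneg (bval_nonneg _) (by positivity)
  · gcongr; exact bval_le _
  have hu : ∀ y : ℝ, 0 ≤ y → y + 1/2^n ≤ 1 → 0 ≤ y + 2 * ε' ∧ y + 2*ε' ≤ 1 := by
    intro y a b
    constructor <;> linarith
  have key1 : hS n (Fin.tail σ) (fun x => f (x + bval (b != σ 0) / 2^(n+1)))
      (fun y => tent (j+1) m ((y + bval b)/2 + ε')) =
      hS n (Fin.tail σ) (fun x => f (x + bval (b != σ 0) / 2^(n+1))) (fun y => tent j m' (y + 2 * ε')) / 2 := by
    unfold hS
    rw [Finset.sum_div]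
    refine Finset.sum_congr rfl fun t _ => ?_
    obtain ⟨a, c⟩ := hy_range n (Fin.tail σ) t
    have := (H _ (hu _ a c).1 (hu _ a c).2).1
    rw [mul_div_assoc, ← this]
    congr 2; ring_nf
  have key2 : ∀ g : ℝ → ℝ, hS n (Fin.tail σ) g
      (fun y => tent (j+1) m ((y + bval (!b))/2 + ε')) = 0 := by
    intro g
    unfold hS
    refine Finset.sum_eq_zero fun t _ => ?_
    obtain ⟨a, c⟩ := hy_range n (Fin.tail σ) t
    have := (H _ (hu _ a c).1 (hu _ a c).2).2
    rw [mul_eq_zero]; right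
    rw [← this]
    ring_nf
  rw [← key1, hS_cons, Fintype.sum_bool]
  cases b <;> cases hσ : σ 0 <;> simp at key2 ⊢ <;> rw [key2]

lemma hS_zero (σ : Fin 0 → Bool) (f g : ℝ → ℝ) : hS 0 σ f g = f 0 * g 0 := by
  simp [hS, hammersleyShifted]

/-- the key bound for interior shapes -/
def KK (j1 j2 : ℕ) : Prop := ∀ (n : ℕ) (σ : Fin n → Bool) (ε ε' : ℝ), 0 ≤ ε → ε ≤ 1/2^n → 0 ≤ ε' →
  ε' ≤ 1/2^n → ∀ m1 m2 : ℕ, m1 < 2^j1 → m2 < 2^j2 →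
  (j1 + j2 + 2 ≤ n → |hS n σ (fun x => tent j1 m1 (x + ε)) (fun y => tent j2 m2 (y + ε'))
      - 2^n / (16 * 4^(j1+j2))| ≤ 1 / (4 * 2^n)) ∧
  (n ≤ j1 + j2 + 1 → |hS n σ (fun x => tent j1 m1 (x + ε)) (fun y => tent j2 m2 (y + ε'))| ≤
      1 / (2 * 2^(j1+j2)))

lemma KK_symm {j1 j2 : ℕ} (h : KK j1 j2) : KK j2 j1 := by
  intro n σ ε ε' h1 h2 h3 h4 m1 m2 hm1 hm2
  rw [hS_swap, add_comm j2 j1]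
  exact h n _ ε' ε h3 h4 h1 h2 m2 m1 hm2 hm1

lemma tent_mul_le (j1 j2 m1 m2 : ℕ) (x y : ℝ) :
    |tent j1 m1 x * tent j2 m2 y| ≤ 1 / (4 * 2^(j1+j2)) := by
  rw [abs_of_nonneg (mul_nonneg (tent_nonneg _ _ _) (tent_nonneg _ _ _))]
  calc _ ≤ (1/2/2^j1) * (1/2/2^j2) :=
        mul_le_mul (tent_le _ _ _) (tent_le _ _ _) (tent_nonneg _ _ _) (by positivity)
    _ = _ := by rw [pow_add]; field_simp; norm_num

lemma KK_step {j1 j2 : ℕ} (h : KK j1 j2) : KK j1 (j2+1) := by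
  intro n σ ε ε' h1 h2 h3 h4 m1 m2 hm1 hm2
  cases n with
  | zero =>
    refine ⟨fun h => by omega, fun _ => ?_⟩
    rw [hS_zero]
    refine (tent_mul_le _ _ _ _ _ _).trans ?_
    gcongr; norm_num
  | succ n =>
    obtain ⟨δ, m', ⟨hδ0, hδ1⟩, hm', H⟩ := hS_step j2 m2 hm2 n σ ε' h3 h4
    rw [H]
    have e2 : (1:ℝ)/2^(n+1) = 1/2^n/2 := by rw [pow_succ]; field_simp
    obtain ⟨K1, K2⟩ := h n (Fin.tail σ) (δ + ε) (2 * ε') (by linarith) (by linarith) (by linarith)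
      (by linarith) m1 m' hm1 hm'
    simp only [← add_assoc] at K1 K2
    set s := hS n (Fin.tail σ) (fun x => tent j1 m1 (x + δ + ε)) (fun y => tent j2 m' (y + 2 * ε'))
    constructor
    · intro hh
      have := K1 (by omega)
      rw [show s/2 - 2^(n+1) / (16 * 4^(j1 + (j2+1))) = (s - 2^n / (16 * 4^(j1+j2)))/2 by
        rw [← add_assoc, pow_succ, pow_succ]; field_simp; ring, abs_div, abs_two]
      calc _ ≤ (1 / (4 * 2^n))/2 := by gcongr
        _ = (1:ℝ) / (4 * 2^(n+1)) := by rw [pow_succ]; field_simp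
    · intro hh
      have := K2 (by omega)
      rw [abs_div, abs_two]
      calc _ ≤ (1 / (2 * 2^(j1+j2)))/2 := by gcongr
        _ = (1:ℝ) / (2 * 2^(j1 + (j2+1))) := by rw [← add_assoc, pow_succ]; field_simp

lemma tau_half (w : ℝ) (h0 : 0 ≤ w) (h1 : w ≤ 1/2) : tau w = w ∧ tau (w + 1/2) = 1/2 - w := by
  refine ⟨tau_lo h0 h1, ?_⟩
  rw [tau_hi (by linarith) (by linarith)]; ring

lemma four_term (q X Y ε ε' : ℝ) (s0 s1 : Bool) (hX : 0 ≤ X) (hX1 : X / 2 + 2 * q ≤ 1/2) (hY : 0 ≤ Y)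
    (hY1 : Y / 2 + 2 * q ≤ 1/2) (h1 : 0 ≤ ε) (h2 : ε ≤ q) (h3 : 0 ≤ ε') (h4 : ε' ≤ q) :
    |∑ b : Bool, ∑ a : Bool, tau ((Y + bval a * (2 * q) + bval (b != s0))/2 + ε') *
      tau ((X + bval (a != s1))/2 + bval b * q + ε) - 1/4| ≤ q^2 := by
  have r : ∀ w a b c : ℝ, (w + a + b) / 2 + c = (w/2 + a/2 + c) + b/2 := by intros; ring
  have r' : ∀ w a b c : ℝ, (w + a) / 2 + b + c = (w/2 + b + c) + a/2 := by intros; ring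
  have A : ∀ a : Bool, 0 ≤ Y/2 + bval a * (2*q)/2 + ε' ∧ Y/2 + bval a * (2*q)/2 + ε' ≤ 1/2 := by
    intro a; cases a <;> simp only [bval_true, bval_false] <;> constructor <;> linarith
  have B : ∀ a : Bool, 0 ≤ X/2 + bval a * q + ε ∧ X/2 + bval a * q + ε ≤ 1/2 := by
    intro a; cases a <;> simp only [bval_true, bval_false] <;> constructor <;> linarith
  have A' : ∀ a s : Bool, tau ((Y/2 + bval a * (2*q)/2 + ε') + bval s / 2) =
      (1 - bval s) * (Y/2 + bval a * (2*q)/2 + ε') + bval s * (1/2 - (Y/2 + bval a * (2*q)/2 + ε')) := by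
    intro a s
    obtain ⟨e1, e2⟩ := tau_half _ (A a).1 (A a).2
    cases s
    · rw [bval_false, zero_div, add_zero, e1]; ring
    · rw [bval_true, e2]; ring
  have B' : ∀ a s : Bool, tau ((X/2 + bval a * q + ε) + bval s / 2) =
      (1 - bval s) * (X/2 + bval a * q + ε) + bval s * (1/2 - (X/2 + bval a * q + ε)) := by
    intro a s
    obtain ⟨e1, e2⟩ := tau_half _ (B a).1 (B a).2
    cases s
    · rw [bval_false, zero_div, add_zero, e1]; ring
    · rw [bval_true, e2]; ring
  have h : ∀ z : ℝ, (z = q^2 ∨ z = -q^2) → |z| ≤ q^2 := by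
    rintro z (rfl | rfl)
    · rw [abs_of_nonneg (sq_nonneg q)]
    · rw [abs_neg, abs_of_nonneg (sq_nonneg q)]
  apply h
  simp only [r, r', A', B', Fintype.sum_bool]
  cases s0 <;> cases s1 <;> simp only [Bool.true_bne, Bool.false_bne, Bool.not_true, Bool.not_false,
    bval_true, bval_false] <;> first | (left; ring; done) | (right; ring; done)

lemma tent_zero (z : ℝ) : tent 0 0 z = tau z := by simp [tent]

lemma KK_zero : KK 0 0 := by
  intro n σ ε ε' h1 h2 h3 h4 m1 m2 hm1 hm2
  obtain rfl : m1 = 0 := by simpa using hm1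
  obtain rfl : m2 = 0 := by simpa using hm2
  match n, σ, h2, h4 with
  | 0, σ, h2, h4 =>
    refine ⟨fun h => by omega, fun _ => ?_⟩
    rw [hS_zero]
    refine (tent_mul_le _ _ _ _ _ _).trans ?_
    norm_num
  | 1, σ, h2, h4 =>
    refine ⟨fun h => by omega, fun _ => ?_⟩
    rw [hS_cons, Fintype.sum_bool, hS_zero, hS_zero]
    refine (abs_add_le _ _).trans ?_
    refine (add_le_add (tent_mul_le _ _ _ _ _ _) (tent_mul_le _ _ _ _ _ _)).trans ?_
    norm_num
  | n+2, σ, h2, h4 =>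
    refine ⟨fun _ => ?_, fun h => by omega⟩
    simp only [tent_zero]
    rw [hS_cons]
    rw [Finset.sum_congr rfl (fun b _ => hS_swap (n+1) _ _ _)]
    simp only [hS_cons n]
    unfold hS
    set σ' : Fin n → Bool := Fin.tail fun i : Fin (n+1) => Fin.tail σ i.rev
    set s1 := Fin.tail σ (Fin.rev 0)
    have e : ∀ F : Bool → Bool → (Fin n → Bool) → ℝ, ∑ b, ∑ a, ∑ t, F b a t = ∑ t, ∑ b, ∑ a, F b a t := by
      intro F
      rw [Finset.sum_comm]
      simp only [Fintype.sum_bool, Finset.sum_add_distrib]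
      ring
    rw [e]
    have q : (0:ℝ) < 2^n := by positivity
    have e1 : (1:ℝ)/2^(n+2) = 1/2^n/4 := by rw [pow_add]; field_simp; norm_num
    have key : ∀ t : Fin n → Bool, |∑ b : Bool, ∑ a : Bool,
        tau (((hammersleyShifted n σ' t).1 + bval a / 2^(n+1) + bval (b != σ 0))/2 + ε') *
        tau (((hammersleyShifted n σ' t).2 + bval (a != s1))/2 + bval b / 2^(n+2) + ε) - 1/4| ≤ (1/2^(n+2))^2 := by
      intro t
      have := four_term (1/2^(n+2)) (hammersleyShifted n σ' t).2 (hammersleyShifted n σ' t).1 ε ε' (σ 0) s1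
        (hy_range n σ' t).1 (by have := (hy_range n σ' t).2; linarith)
        (hx_range n σ' t).1 (by have := (hx_range n σ' t).2; linarith) h1 h2 h3 h4
      have r1 : ∀ a : Bool, bval a * (2 * (1/2^(n+2))) = bval a / 2^(n+1) := by
        intro a; rw [pow_succ 2 (n+1)]; field_simp
      have r2 : ∀ a : Bool, bval a * (1/2^(n+2)) = bval a / 2^(n+2) := by
        intro a; field_simp
      simp only [r1, r2] at this
      exact this
    have tot : (2:ℝ)^(n+2) / (16 * 4^(0+0)) = ∑ t : Fin n → Bool, (1/4 : ℝ) := by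
      simp [pow_add]; ring
    rw [tot, ← Finset.sum_sub_distrib]
    refine (Finset.abs_sum_le_sum_abs _ _).trans ?_
    refine (Finset.sum_le_sum fun t _ => key t).trans ?_
    simp only [Finset.sum_const, Finset.card_univ, Fintype.card_fun, Fintype.card_bool, Fintype.card_fin, nsmul_eq_mul]
    push_cast
    apply le_of_eq
    rw [pow_add]; field_simp; norm_num

lemma KK_all (j1 j2 : ℕ) : KK j1 j2 := by
  have h0 : ∀ j, KK 0 j := fun j => by
    induction j with
    | zero => exact KK_zero
    | succ j ih => exact KK_step ih
  induction j2 with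
  | zero => exact KK_symm (h0 j1)
  | succ j ih => exact KK_step ih

lemma sum_hx (n : ℕ) (σ : Fin n → Bool) : ∑ t, (hammersleyShifted n σ t).1 = 2^n/2 - 1/2 := by
  induction n with
  | zero => simp [hammersleyShifted]
  | succ n ih =>
    rw [sum_cons]
    simp only [hx_cons, Finset.sum_add_distrib, ih, Fintype.sum_bool, bval_true, bval_false]
    simp only [Finset.sum_const, Finset.card_univ, Fintype.card_fun, Fintype.card_bool, Fintype.card_fin, nsmul_eq_mul]
    push_cast
    rw [pow_succ]; field_simp; ring

lemma sum_hy (n : ℕ) (σ : Fin n → Bool) : ∑ t, (hammersleyShifted n σ t).2 = 2^n/2 - 1/2 := by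
  rw [← sum_hx n (fun i => σ i.rev), ← Equiv.sum_comp (revE n σ) (fun t => (hammersleyShifted n (fun i => σ i.rev) t).1)]
  exact Finset.sum_congr rfl fun t _ => (hx_rev n σ t).symm

/-- the key bound for boundary shapes -/
lemma MM (k : ℕ) : ∀ (n : ℕ) (σ : Fin n → Bool) (ε ε' : ℝ), 0 ≤ ε → ε ≤ 1/2^n → 0 ≤ ε' →
    ε' ≤ 1/2^n → ∀ m : ℕ, m < 2^k → k ≤ n →
    |hS n σ (fun x => 1 - (x + ε)) (fun y => tent k m (y + ε')) - 2^n / (8 * 4^k)| ≤ 1/2^k := by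
  induction k with
  | zero =>
    intro n σ ε ε' h1 h2 h3 h4 m hm hk
    obtain rfl : m = 0 := by simpa using hm
    simp only [tent_zero]
    cases n with
    | zero =>
      rw [hS_zero]
      have a := tau_nonneg (0 + ε')
      have b := tau_le (0 + ε')
      norm_num at h2 ⊢
      norm_num at a b
      rw [abs_le]
      constructor <;> nlinarith
    | succ n =>
      rw [hS_cons]
      unfold hS
      rw [Finset.sum_comm]
      have e1 : (1:ℝ)/2^(n+1) = 1/2^n/2 := by rw [pow_succ]; field_simp
      have key : ∀ t : Fin n → Bool, |∑ b : Bool,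
          (1 - ((hammersleyShifted n (Fin.tail σ) t).1 + bval b / 2^(n+1) + ε)) *
            tau (((hammersleyShifted n (Fin.tail σ) t).2 + bval (b != σ 0))/2 + ε') -
          (1/2 - (hammersleyShifted n (Fin.tail σ) t).1/2)| ≤ 1/2/2^n := by
        intro t
        obtain ⟨hy0, hy1⟩ := hy_range n (Fin.tail σ) t
        set X := (hammersleyShifted n (Fin.tail σ) t).1
        set Y := (hammersleyShifted n (Fin.tail σ) t).2
        have r' : ∀ b : ℝ, (Y + b)/2 + ε' = (Y/2 + ε') + b/2 := by intros; ring
        obtain ⟨e1', e2'⟩ := tau_half (Y/2 + ε') (by linarith) (by linarith)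
        simp only [r', Fintype.sum_bool]
        set w := Y/2 + ε'
        have hw : 0 ≤ w := by simp only [w]; linarith
        have hw1 : w ≤ 1/2 := by simp only [w]; linarith
        have d1 : (1:ℝ)/2/2^n = 1/2^n/2 := by ring
        have pos : (0:ℝ) < 1/2^n := by positivity
        rw [d1]
        cases σ 0 <;> simp only [Bool.true_bne, Bool.false_bne, Bool.not_true, Bool.not_false,
          bval_true, bval_false, zero_div, add_zero, e1', e2', e1] <;> rw [abs_le] <;>
          constructor <;> nlinarith
      have tot : (2:ℝ)^(n+1) / (8 * 4^0) = ∑ t : Fin n → Bool, (1/2 - (hammersleyShifted n (Fin.tail σ) t).1/2) - 1/4 := by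
        rw [Finset.sum_sub_distrib, ← Finset.sum_div Finset.univ (fun t => (hammersleyShifted n (Fin.tail σ) t).1), sum_hx]
        simp [pow_succ]; ring
      rw [tot, ← sub_add, ← Finset.sum_sub_distrib]
      refine (abs_add_le _ _).trans ?_
      have := (Finset.abs_sum_le_sum_abs _ _).trans (Finset.sum_le_sum fun t (_ : t ∈ Finset.univ) => key t)
      refine (add_le_add_left this _).trans ?_
      simp only [Finset.sum_const, Finset.card_univ, Fintype.card_fun, Fintype.card_bool, Fintype.card_fin, nsmul_eq_mul]
      push_cast
      rw [mul_div_cancel₀ _ (by positivity)]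
      norm_num [abs_of_pos]
  | succ k ih =>
    intro n σ ε ε' h1 h2 h3 h4 m hm hk
    cases n with
    | zero => omega
    | succ n =>
      obtain ⟨δ, m', ⟨hδ0, hδ1⟩, hm', H⟩ := hS_step k m hm n σ ε' h3 h4
      rw [H]
      have e2 : (1:ℝ)/2^(n+1) = 1/2^n/2 := by rw [pow_succ]; field_simp
      have K := ih n (Fin.tail σ) (δ + ε) (2 * ε') (by linarith) (by linarith) (by linarith)
        (by linarith) m' hm' (by omega)
      simp only [← add_assoc] at K
      set s := hS n (Fin.tail σ) (fun x => 1 - (x + δ + ε)) (fun y => tent k m' (y + 2 * ε'))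
      rw [show s/2 - 2^(n+1) / (8 * 4^(k+1)) = (s - 2^n / (8 * 4^k))/2 by
        rw [pow_succ, pow_succ]; field_simp; ring, abs_div, abs_two]
      calc _ ≤ (1 / 2^k)/2 := by gcongr
        _ = (1:ℝ) / 2^(k+1) := by rw [pow_succ]; field_simp

lemma zeroCount_tail (n : ℕ) (σ : Fin (n+1) → Bool) :
    (zeroCount σ : ℝ) = zeroCount (Fin.tail σ) + (1 - bval (σ 0)) := by
  unfold zeroCount
  rw [Finset.card_filter, Finset.card_filter, Fin.sum_univ_succ, add_comm]
  cases h : σ 0 <;> simp only [Fin.tail, bval] <;> push_cast <;> simp <;>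
    rw [Finset.card_filter, Nat.cast_sum] <;> refine Finset.sum_congr rfl fun x _ => ?_ <;> congr

lemma sum_hxy (n : ℕ) (σ : Fin n → Bool) :
    ∑ t, (hammersleyShifted n σ t).1 * (hammersleyShifted n σ t).2 =
      2^n * (1/2 - 1/(2*2^n))^2 + (2 * zeroCount σ - n)/8 := by
  induction n with
  | zero => simp [hammersleyShifted, zeroCount]
  | succ n ih =>
    have h1 := sum_hx n (Fin.tail σ)
    have h2 := sum_hy n (Fin.tail σ)
    have h3 := ih (Fin.tail σ)
    rw [sum_cons, zeroCount_tail]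
    simp only [hx_cons, hy_cons]
    have e : ∀ b : Bool, ∑ t, ((hammersleyShifted n (Fin.tail σ) t).1 + bval b / 2^(n+1)) *
        (((hammersleyShifted n (Fin.tail σ) t).2 + bval (b != σ 0))/2) =
        (∑ t, (hammersleyShifted n (Fin.tail σ) t).1 * (hammersleyShifted n (Fin.tail σ) t).2)/2 +
        bval (b != σ 0) / 2 * (∑ t, (hammersleyShifted n (Fin.tail σ) t).1) +
        bval b / 2^(n+1) / 2 * (∑ t, (hammersleyShifted n (Fin.tail σ) t).2) +
        2^n * (bval b / 2^(n+1) * bval (b != σ 0)/2) := by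
      intro b
      rw [Finset.mul_sum, Finset.mul_sum, Finset.sum_div, ← Finset.sum_add_distrib, ← Finset.sum_add_distrib]
      have : (2:ℝ)^n * (bval b / 2^(n+1) * bval (b != σ 0)/2) = ∑ t : Fin n → Bool, (bval b / 2^(n+1) * bval (b != σ 0)/2) := by
        simp
      rw [this, ← Finset.sum_add_distrib]
      refine Finset.sum_congr rfl fun t _ => ?_
      ring
    simp only [e, h1, h2, h3, Fintype.sum_bool]
    rw [pow_succ]
    have q : (0:ℝ) < 2^n := by positivity
    cases σ 0 <;> simp only [Bool.true_bne, Bool.false_bne, Bool.not_true, Bool.not_false,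
          bval_true, bval_false] <;> push_cast <;> field_simp <;> ring

/-- one-dimensional counting integral -/
noncomputable def hPhi (j : ℤ) (m : ℕ) (z : ℝ) : ℝ :=
  ∫ t in Set.Icc (0:ℝ) 1, (if z < t then (1:ℝ) else 0) * haar1 j m t

/-- one-dimensional moment integral -/
noncomputable def hI (j : ℤ) (m : ℕ) : ℝ :=
  ∫ t in Set.Icc (0:ℝ) 1, t * haar1 j m t

lemma meas_haar1 (j : ℤ) (m : ℕ) : Measurable (haar1 j m) := by
  unfold haar1
  by_cases h : j = -1
  · simp only [h, if_true]
    exact Measurable.ite (measurableSet_Ico (a := (0:ℝ)) (b := 1)) measurable_const measurable_const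
  · simp only [h, if_false]
    refine Measurable.ite (measurableSet_Ico (a := (2 * m : ℝ) / 2 ^ (j.toNat + 1))) measurable_const ?_
    exact Measurable.ite (measurableSet_Ico (a := (2 * m + 1: ℝ) / 2 ^ (j.toNat + 1))) measurable_const measurable_const

lemma haar1_abs (j : ℤ) (m : ℕ) (x : ℝ) : |haar1 j m x| ≤ 1 := by
  unfold haar1
  split_ifs <;> simp

lemma integ_cnt (j : ℤ) (m : ℕ) (z : ℝ) :
    Integrable (fun t => (if z < t then (1:ℝ) else 0) * haar1 j m t) (volume.restrict (Set.Icc (0:ℝ) 1)) := by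
  refine Integrable.of_bound (C := 1) ?_ (Filter.Eventually.of_forall fun t => ?_)
  · refine (Measurable.mul ?_ (meas_haar1 j m)).aestronglyMeasurable
    exact Measurable.ite (measurableSet_Ioi) measurable_const measurable_const
  · rw [norm_mul, Real.norm_eq_abs, Real.norm_eq_abs]
    have := haar1_abs j m t
    split_ifs <;> simp [this]

lemma integ_id (j : ℤ) (m : ℕ) :
    Integrable (fun t => t * haar1 j m t) (volume.restrict (Set.Icc (0:ℝ) 1)) := by
  refine Integrable.of_bound (C := 1) ?_ ?_
  · exact (measurable_id.mul (meas_haar1 j m)).aestronglyMeasurable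
  · filter_upwards [ae_restrict_mem measurableSet_Icc] with t ht
    rw [norm_mul, Real.norm_eq_abs, Real.norm_eq_abs]
    have := haar1_abs j m t
    have h2 : |t| ≤ 1 := by rw [abs_of_nonneg ht.1]; exact ht.2
    nlinarith [abs_nonneg t, abs_nonneg (haar1 j m t)]

lemma sq_restrict : (volume : Measure (ℝ × ℝ)).restrict (Set.Icc (0 : ℝ × ℝ) 1) =
    (volume.restrict (Set.Icc (0:ℝ) 1)).prod (volume.restrict (Set.Icc (0:ℝ) 1)) := by
  rw [Measure.prod_restrict, ← Measure.volume_eq_prod, Set.Icc_prod_Icc]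
  rfl

lemma countIn_eq {ι : Type*} [Fintype ι] (P : ι → ℝ × ℝ) (hP : ∀ k, 0 ≤ (P k).1 ∧ 0 ≤ (P k).2) (t : ℝ × ℝ) :
    (countIn P t : ℝ) = ∑ k, (if (P k).1 < t.1 then (1:ℝ) else 0) * (if (P k).2 < t.2 then (1:ℝ) else 0) := by
  unfold countIn
  rw [Finset.card_filter]
  push_cast
  refine Finset.sum_congr rfl fun k _ => ?_
  have := hP k
  by_cases h1 : (P k).1 < t.1 <;> by_cases h2 : (P k).2 < t.2 <;> simp [h1, h2, this]

lemma haarCoeff_eq {ι : Type*} [Fintype ι] (P : ι → ℝ × ℝ) (hP : ∀ k, 0 ≤ (P k).1 ∧ 0 ≤ (P k).2)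
    (j1 j2 : ℤ) (m1 m2 : ℕ) :
    haarCoeff P (j1, j2) (m1, m2) =
      (∑ k, hPhi j1 m1 (P k).1 * hPhi j2 m2 (P k).2) / Fintype.card ι - hI j1 m1 * hI j2 m2 := by
  unfold haarCoeff
  rw [sq_restrict]
  have e : ∀ t : ℝ × ℝ, localDisc P t * haar2 (j1, j2) (m1, m2) t =
      (∑ k, ((if (P k).1 < t.1 then (1:ℝ) else 0) * haar1 j1 m1 t.1) *
        ((if (P k).2 < t.2 then (1:ℝ) else 0) * haar1 j2 m2 t.2)) / Fintype.card ι -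
      (t.1 * haar1 j1 m1 t.1) * (t.2 * haar1 j2 m2 t.2) := by
    intro t
    unfold localDisc haar2
    rw [countIn_eq P hP, sub_mul, div_mul_eq_mul_div, Finset.sum_mul]
    congr 1
    · congr 1
      refine Finset.sum_congr rfl fun k _ => ?_
      ring
    · ring
  simp only [e]
  have i1 : ∀ k ∈ (Finset.univ : Finset ι), Integrable (fun t : ℝ × ℝ => ((if (P k).1 < t.1 then (1:ℝ) else 0) * haar1 j1 m1 t.1) *
        ((if (P k).2 < t.2 then (1:ℝ) else 0) * haar1 j2 m2 t.2))
        ((volume.restrict (Set.Icc (0:ℝ) 1)).prod (volume.restrict (Set.Icc (0:ℝ) 1))) :=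
    fun k _ => (integ_cnt j1 m1 (P k).1).mul_prod (integ_cnt j2 m2 (P k).2)
  have i2 := (integ_id j1 m1).mul_prod (integ_id j2 m2)
  rw [integral_sub ((integrable_finsetSum _ i1).div_const _) i2, integral_div, integral_finsetSum _ i1]
  congr 1
  · congr 1
    refine Finset.sum_congr rfl fun k _ => ?_
    exact integral_prod_mul (fun t => (if (P k).1 < t then (1:ℝ) else 0) * haar1 j1 m1 t)
      (fun t => (if (P k).2 < t then (1:ℝ) else 0) * haar1 j2 m2 t)
  · exact integral_prod_mul (fun t => t * haar1 j1 m1 t) (fun t => t * haar1 j2 m2 t)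

lemma int_ind (u v z : ℝ) (hu : 0 ≤ u) (hv : v ≤ 1) :
    ∫ t in Set.Icc (0:ℝ) 1, (if z < t then (1:ℝ) else 0) * (Set.Ico u v).indicator (fun _ => 1) t
      = max 0 (v - max z u) := by
  have e : (fun t : ℝ => (if z < t then (1:ℝ) else 0) * (Set.Ico u v).indicator (fun _ => 1) t) =
      (Set.Ioi z ∩ Set.Ico u v).indicator (fun _ => 1) := by
    ext t
    by_cases h : z < t <;> simp [Set.indicator, h]
  rw [e, setIntegral_indicator (measurableSet_Ioi.inter measurableSet_Ico)]
  have s : Set.Icc (0:ℝ) 1 ∩ (Set.Ioi z ∩ Set.Ico u v) = Set.Ioi z ∩ Set.Ico u v := by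
    apply Set.inter_eq_right.2
    rintro t ⟨_, h1, h2⟩
    exact ⟨by linarith, by linarith⟩
  rw [s]
  have s2 : (Set.Ioi z ∩ Set.Ico u v : Set ℝ) =ᵐ[volume] (Set.Ici z ∩ Set.Ico u v : Set ℝ) :=
    Ioi_ae_eq_Ici.inter (ae_eq_refl _)
  rw [setIntegral_congr_set s2]
  have s3 : Set.Ici z ∩ Set.Ico u v = Set.Ico (max z u) v := by
    ext t; simp [and_assoc]
  rw [s3]
  simp [Measure.real, max_comm, ENNReal.toReal_ofReal']

lemma int_id (u v : ℝ) (hu : 0 ≤ u) (huv : u ≤ v) (hv : v ≤ 1) :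
    ∫ t in Set.Icc (0:ℝ) 1, t * (Set.Ico u v).indicator (fun _ => 1) t = (v^2 - u^2)/2 := by
  have e : (fun t : ℝ => t * (Set.Ico u v).indicator (fun _ => 1) t) =
      (Set.Ico u v).indicator (fun t => t) := by
    ext t
    by_cases h : t ∈ Set.Ico u v <;> simp [h]
  rw [e, setIntegral_indicator measurableSet_Ico]
  have s : Set.Icc (0:ℝ) 1 ∩ Set.Ico u v = Set.Ico u v := by
    apply Set.inter_eq_right.2
    rintro t ⟨h1, h2⟩
    exact ⟨by linarith, by linarith⟩
  rw [s, integral_Ico_eq_integral_Ioc, ← intervalIntegral.integral_of_le huv, integral_id]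

lemma haar1_neg (m : ℕ) (t : ℝ) : haar1 (-1) m t = (Set.Ico (0:ℝ) 1).indicator (fun _ => 1) t := by
  simp [haar1, Set.indicator]

lemma haar1_nat (j m : ℕ) (t : ℝ) : haar1 (j:ℤ) m t =
    (Set.Ico ((2 * m : ℝ) / 2 ^ (j + 1)) ((2 * m + 1 : ℝ) / 2 ^ (j + 1))).indicator (fun _ => 1) t -
    (Set.Ico ((2 * m + 1 : ℝ) / 2 ^ (j + 1)) ((2 * m + 2 : ℝ) / 2 ^ (j + 1))).indicator (fun _ => 1) t := by
  have h : ¬ ((j:ℤ) = -1) := by omega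
  simp only [haar1, h, if_false, Set.indicator, Set.mem_Ico, Int.toNat_natCast]
  split_ifs with h1 h2 h3
  · exfalso; linarith [h1.2, h2.1]
  · simp
  · simp
  · simp

lemma hPhi_neg (z : ℝ) (h0 : 0 ≤ z) (h1 : z ≤ 1) : hPhi (-1) 0 z = 1 - z := by
  unfold hPhi
  simp only [haar1_neg]
  rw [int_ind _ _ _ le_rfl le_rfl, max_eq_left h0, max_eq_right (by linarith)]

lemma hI_neg : hI (-1) 0 = 1/2 := by
  unfold hI
  simp only [haar1_neg]
  rw [int_id _ _ le_rfl zero_le_one le_rfl]; norm_num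

lemma integ_ind (u v z : ℝ) : Integrable (fun t => (if z < t then (1:ℝ) else 0) *
    (Set.Ico u v).indicator (fun _ => (1:ℝ)) t) (volume.restrict (Set.Icc (0:ℝ) 1)) := by
  refine Integrable.of_bound (C := 1) ?_ (Filter.Eventually.of_forall fun t => ?_)
  · refine (Measurable.mul ?_ (measurable_const.indicator measurableSet_Ico)).aestronglyMeasurable
    exact Measurable.ite (measurableSet_Ioi) measurable_const measurable_const
  · simp only [Set.indicator]
    split_ifs <;> simp

lemma integ_ind' (u v : ℝ) : Integrable (fun t => t *
    (Set.Ico u v).indicator (fun _ => (1:ℝ)) t) (volume.restrict (Set.Icc (0:ℝ) 1)) := by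
  refine Integrable.of_bound (C := 1) ?_ ?_
  · exact (measurable_id.mul (measurable_const.indicator measurableSet_Ico)).aestronglyMeasurable
  · filter_upwards [ae_restrict_mem measurableSet_Icc] with t ht
    simp only [Set.indicator]
    split_ifs
    · simp [abs_of_nonneg ht.1, ht.2]
    · simp

lemma dy_bounds (j m : ℕ) (hm : m < 2^j) :
    (0:ℝ) ≤ (2 * m : ℝ) / 2 ^ (j + 1) ∧ (2 * m : ℝ) / 2 ^ (j + 1) ≤ (2 * m + 1 : ℝ) / 2 ^ (j + 1) ∧
    (2 * m + 1 : ℝ) / 2 ^ (j + 1) ≤ (2 * m + 2 : ℝ) / 2 ^ (j + 1) ∧ (2 * m + 2 : ℝ) / 2 ^ (j + 1) ≤ 1 := by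
  refine ⟨by positivity, by gcongr; linarith, by gcongr; norm_num, ?_⟩
  rw [div_le_one (by positivity), pow_succ]
  have : (m:ℝ) + 1 ≤ 2^j := by exact_mod_cast hm
  linarith

lemma max_aux (w : ℝ) :
    max 0 (1/2 - max w 0) - max 0 (1 - max w (1/2)) = - max 0 (min w (1 - w)) := by
  rcases le_total w 0 with h | h
  · rw [max_eq_right h, min_eq_left (by linarith), max_eq_left h, max_eq_right (a := w) (by linarith)]
    norm_num
  rw [max_eq_left h]
  rcases le_total w (1/2) with h1 | h1
  · rw [max_eq_right h1, min_eq_left (by linarith), max_eq_right h, max_eq_right (by linarith)]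
    norm_num
  rw [max_eq_left h1, min_eq_right (by linarith), max_eq_left (by linarith)]
  ring

lemma hPhi_nat (j m : ℕ) (hm : m < 2^j) (z : ℝ) : hPhi (j:ℤ) m z = - tent j m z := by
  obtain ⟨b1, b2, b3, b4⟩ := dy_bounds j m hm
  unfold hPhi
  simp only [haar1_nat, mul_sub]
  rw [integral_sub (integ_ind _ _ _) (integ_ind _ _ _), int_ind _ _ _ b1 (b3.trans b4),
    int_ind _ _ _ (b1.trans b2) b4]
  unfold tent tau
  have q : (0:ℝ) < 2^j := by positivity
  have e1 : (2 * m : ℝ) / 2 ^ (j + 1) = m / 2^j := by rw [pow_succ]; field_simp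
  have e2 : (2 * m + 1: ℝ) / 2 ^ (j + 1) = m / 2^j + 1/2/2^j := by rw [pow_succ]; field_simp
  have e3 : (2 * m + 2: ℝ) / 2 ^ (j + 1) = m / 2^j + 1/2^j := by rw [pow_succ]; field_simp
  rw [e1, e2, e3]
  obtain ⟨w, rfl⟩ : ∃ w, z = m / 2^j + w / 2^j := ⟨z * 2^j - m, by field_simp; ring⟩
  have e4 : ((m:ℝ) / 2^j + w / 2^j) * 2^j - m = w := by field_simp; ring
  rw [e4]
  set a := (m:ℝ)/2^j
  have c1 : max (a + w / 2^j) a = a + max w 0 / 2^j := by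
    rcases le_total w 0 with h | h
    · rw [max_eq_right h, max_eq_right]
      · simp
      · have := div_nonpos_of_nonpos_of_nonneg h q.le; linarith
    · rw [max_eq_left h, max_eq_left]
      have := div_nonneg h q.le; linarith
  have c2 : max (a + w / 2^j) (a + 1/2/2^j) = a + max w (1/2) / 2^j := by
    rcases le_total w (1/2) with h | h
    · rw [max_eq_right h, max_eq_right]
      gcongr
    · rw [max_eq_left h, max_eq_left]
      gcongr
  have c3 : ∀ x y : ℝ, max 0 (a + x/2^j - (a + y/2^j)) = max 0 (x - y) / 2^j := by
    intro x y
    rw [add_sub_add_left_eq_sub, ← sub_div]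
    rcases le_total (x - y) 0 with h | h
    · rw [max_eq_left h, max_eq_left (div_nonpos_of_nonpos_of_nonneg h q.le), zero_div]
    · rw [max_eq_right h, max_eq_right (div_nonneg h q.le)]
  rw [c1, c2, c3, c3, ← sub_div, ← neg_div]
  congr 1
  exact max_aux w

lemma hI_nat (j m : ℕ) (hm : m < 2^j) : hI (j:ℤ) m = - (1 / (4 * 4^j)) := by
  obtain ⟨b1, b2, b3, b4⟩ := dy_bounds j m hm
  unfold hI
  simp only [haar1_nat, mul_sub]
  rw [integral_sub (integ_ind' _ _) (integ_ind' _ _), int_id _ _ b1 b2 (b3.trans b4),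
    int_id _ _ (b1.trans b2) b3 b4]
  have : (4:ℝ)^j = 2^j * 2^j := by rw [← mul_pow]; norm_num
  rw [this, pow_succ]
  field_simp
  ring

lemma hH_nonneg (n : ℕ) (σ : Fin n → Bool) (k : Fin n → Bool) :
    0 ≤ (hammersleyShifted n σ k).1 ∧ 0 ≤ (hammersleyShifted n σ k).2 :=
  ⟨(hx_range n σ k).1, (hy_range n σ k).1⟩

lemma hH_le (n : ℕ) (σ : Fin n → Bool) (k : Fin n → Bool) :
    (hammersleyShifted n σ k).1 ≤ 1 ∧ (hammersleyShifted n σ k).2 ≤ 1 := by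
  have : (0:ℝ) < 1/2^n := by positivity
  exact ⟨by linarith [(hx_range n σ k).2], by linarith [(hy_range n σ k).2]⟩

lemma mu_int (n : ℕ) (σ : Fin n → Bool) (j1 j2 m1 m2 : ℕ) (h1 : m1 < 2^j1) (h2 : m2 < 2^j2) :
    haarCoeff (hammersleyShifted n σ) ((j1:ℤ), (j2:ℤ)) (m1, m2) =
      hS n σ (tent j1 m1) (tent j2 m2) / 2^n - 1/(16 * 4^(j1+j2)) := by
  rw [haarCoeff_eq _ (hH_nonneg n σ)]
  simp only [hPhi_nat _ _ h1, hPhi_nat _ _ h2, hI_nat _ _ h1, hI_nat _ _ h2, neg_mul_neg]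
  simp only [Fintype.card_fun, Fintype.card_bool, Fintype.card_fin]
  push_cast
  rw [pow_add]
  congr 1
  field_simp; norm_num

lemma mu_left (n : ℕ) (σ : Fin n → Bool) (k m : ℕ) (h : m < 2^k) :
    haarCoeff (hammersleyShifted n σ) (-1, (k:ℤ)) (0, m) =
      -(hS n σ (fun x => 1 - x) (tent k m) / 2^n - 1/(8 * 4^k)) := by
  rw [haarCoeff_eq _ (hH_nonneg n σ)]
  simp only [hPhi_nat _ _ h, hI_nat _ _ h, hI_neg]
  rw [Finset.sum_congr rfl fun t _ => by
    rw [hPhi_neg _ (hH_nonneg n σ t).1 (hH_le n σ t).1, mul_neg]]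
  simp only [Fintype.card_fun, Fintype.card_bool, Fintype.card_fin, Finset.sum_neg_distrib]
  push_cast
  unfold hS
  field_simp; ring

lemma mu_right (n : ℕ) (σ : Fin n → Bool) (k m : ℕ) (h : m < 2^k) :
    haarCoeff (hammersleyShifted n σ) ((k:ℤ), -1) (m, 0) =
      -(hS n (fun i => σ i.rev) (fun x => 1 - x) (tent k m) / 2^n - 1/(8 * 4^k)) := by
  rw [haarCoeff_eq _ (hH_nonneg n σ), ← hS_swap]
  simp only [hPhi_nat _ _ h, hI_nat _ _ h, hI_neg]
  rw [Finset.sum_congr rfl fun t _ => by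
    rw [hPhi_neg _ (hH_nonneg n σ t).2 (hH_le n σ t).2, neg_mul]]
  simp only [Fintype.card_fun, Fintype.card_bool, Fintype.card_fin, Finset.sum_neg_distrib]
  push_cast
  unfold hS
  field_simp; ring

lemma mu_00 (n : ℕ) (σ : Fin n → Bool) :
    haarCoeff (hammersleyShifted n σ) (-1, -1) (0, 0) =
      (1/2 + 1/(2 * 2^n))^2 - 1/4 + (2 * zeroCount σ - n)/8/2^n := by
  rw [haarCoeff_eq _ (hH_nonneg n σ)]
  rw [Finset.sum_congr rfl fun t _ => by
    rw [hPhi_neg _ (hH_nonneg n σ t).1 (hH_le n σ t).1, hPhi_neg _ (hH_nonneg n σ t).2 (hH_le n σ t).2]]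
  have e : ∑ t, (1 - (hammersleyShifted n σ t).1) * (1 - (hammersleyShifted n σ t).2) =
      2^n - ∑ t, (hammersleyShifted n σ t).1 - ∑ t, (hammersleyShifted n σ t).2 +
      ∑ t, (hammersleyShifted n σ t).1 * (hammersleyShifted n σ t).2 := by
    have : (2:ℝ)^n = ∑ t : Fin n → Bool, 1 := by simp
    rw [this, ← Finset.sum_sub_distrib, ← Finset.sum_sub_distrib, ← Finset.sum_add_distrib]
    refine Finset.sum_congr rfl fun t _ => ?_
    ring
  rw [e, sum_hx, sum_hy, sum_hxy, hI_neg]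
  simp only [Fintype.card_fun, Fintype.card_bool, Fintype.card_fin]
  push_cast
  field_simp; ring

lemma B00 (n : ℕ) (hn : 0 < n) (σ : Fin n → Bool) (c : ℝ)
    (h : |2 * (zeroCount σ : ℝ) - n| ≤ c * Real.sqrt n) :
    |haarCoeff (hammersleyShifted n σ) (-1, -1) (0, 0)| ≤ (c + 1) * Real.sqrt n / 2^n := by
  have hs : 1 ≤ Real.sqrt n := by
    rw [Real.one_le_sqrt]; exact_mod_cast hn
  rw [mu_00]
  have q : (1:ℝ) ≤ 2^n := one_le_pow₀ (by norm_num)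
  have e : (1/2 + 1/(2 * 2^n))^2 - 1/4 + (2 * (zeroCount σ:ℝ) - n)/8/2^n =
    (1/2 + 1/2^n/4 + (2 * (zeroCount σ:ℝ) - n)/8) / 2^n := by field_simp; ring
  rw [e, abs_div, abs_of_pos (show (0:ℝ) < 2^n by linarith)]
  gcongr
  have q1 : (0:ℝ) ≤ 1/2^n := by positivity
  have q2 : (1:ℝ)/2^n ≤ 1 := by rw [div_le_one (by linarith)]; exact q
  have := abs_le.1 h
  rw [abs_le]
  constructor <;> nlinarith

lemma four_pow (j : ℕ) : (4:ℝ)^j = 2^j * 2^j := by rw [← mul_pow]; norm_num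

lemma B1 (n : ℕ) (σ : Fin n → Bool) (j1 j2 m1 m2 : ℕ) (h1 : m1 < 2^j1) (h2 : m2 < 2^j2)
    (hl : j1 + j2 + 2 ≤ n) :
    |haarCoeff (hammersleyShifted n σ) ((j1:ℤ), (j2:ℤ)) (m1, m2)| ≤ 1/4^n := by
  rw [mu_int _ _ _ _ _ _ h1 h2]
  have := (KK_all j1 j2 n σ 0 0 le_rfl (by positivity) le_rfl (by positivity) m1 m2 h1 h2).1 hl
  simp only [add_zero] at this
  change |hS n σ (tent j1 m1) (tent j2 m2) - _| ≤ _ at this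
  have e : hS n σ (tent j1 m1) (tent j2 m2) / 2^n - 1/(16 * 4^(j1+j2)) =
    (hS n σ (tent j1 m1) (tent j2 m2) - 2^n/(16 * 4^(j1+j2))) / 2^n := by
    field_simp
  rw [e, abs_div, abs_of_pos (show (0:ℝ) < 2^n by positivity), div_le_iff₀ (by positivity)]
  refine this.trans ?_
  rw [four_pow]
  have : (1:ℝ)/(2^n*2^n) * 2^n = 1/2^n := by field_simp
  rw [this]
  gcongr
  have : (0:ℝ) < 2^n := by positivity
  linarith

lemma B2 (n : ℕ) (σ : Fin n → Bool) (j1 j2 m1 m2 : ℕ) (h1 : m1 < 2^j1) (h2 : m2 < 2^j2)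
    (hl : n ≤ j1 + j2 + 1) :
    |haarCoeff (hammersleyShifted n σ) ((j1:ℤ), (j2:ℤ)) (m1, m2)| ≤ 1/(2^n * 2^(j1+j2)) := by
  rw [mu_int _ _ _ _ _ _ h1 h2]
  have := (KK_all j1 j2 n σ 0 0 le_rfl (by positivity) le_rfl (by positivity) m1 m2 h1 h2).2 hl
  simp only [add_zero] at this
  change |hS n σ (tent j1 m1) (tent j2 m2)| ≤ _ at this
  refine (abs_sub _ _).trans ?_
  have hn : (2:ℝ)^n ≤ 2 * 2^(j1+j2) := by
    rw [← pow_succ']; exact pow_le_pow_right₀ (by norm_num) hl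
  rw [abs_div, abs_of_pos (show (0:ℝ) < 2^n by positivity),
    abs_of_pos (show (0:ℝ) < 1/(16 * 4^(j1+j2)) by positivity)]
  have e1 : |hS n σ (tent j1 m1) (tent j2 m2)| / 2^n ≤ 1 / (2 * 2^(j1+j2)) / 2^n := by gcongr
  have e2 : (1:ℝ)/(16 * 4^(j1+j2)) ≤ 1 / (2 * 2^(j1+j2)) / 2^n := by
    rw [div_div, four_pow]
    apply one_div_le_one_div_of_le (by positivity)
    have : (0:ℝ) < 2^(j1+j2) := by positivity
    nlinarith
  refine (add_le_add e1 e2).trans (le_of_eq ?_)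
  field_simp; norm_num

lemma B2' (n : ℕ) (σ : Fin n → Bool) (j1 j2 m1 m2 : ℕ) (h1 : m1 < 2^j1) (h2 : m2 < 2^j2)
    (h : hS n σ (tent j1 m1) (tent j2 m2) = 0) :
    |haarCoeff (hammersleyShifted n σ) ((j1:ℤ), (j2:ℤ)) (m1, m2)| ≤ 1/4^(j1+j2) := by
  rw [mu_int _ _ _ _ _ _ h1 h2, h, zero_div, zero_sub, abs_neg,
    abs_of_pos (show (0:ℝ) < 1/(16 * 4^(j1+j2)) by positivity)]
  gcongr
  have : (0:ℝ) < 4^(j1+j2) := by positivity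
  linarith

lemma hS_int (n : ℕ) (σ : Fin n → Bool) (j1 m1 : ℕ) (f : ℝ → ℝ) (h : n ≤ j1) :
    hS n σ f (tent j1 m1) = 0 := by
  unfold hS
  refine Finset.sum_eq_zero fun t _ => ?_
  rw [tent_int _ _ _ (hy_int n σ t j1 h), mul_zero]

lemma B4_aux (n : ℕ) (σ : Fin n → Bool) (k m : ℕ) (h : m < 2^k) (hk : k ≤ n) :
    |-(hS n σ (fun x => 1 - x) (tent k m) / 2^n - 1/(8 * 4^k))| ≤ 1/(2^n * 2^k) := by
  have := MM k n σ 0 0 le_rfl (by positivity) le_rfl (by positivity) m h hk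
  simp only [add_zero] at this
  change |hS n σ (fun x => 1 - x) (tent k m) - _| ≤ _ at this
  have e : hS n σ (fun x => 1 - x) (tent k m) / 2^n - 1/(8 * 4^k) =
    (hS n σ (fun x => 1 - x) (tent k m) - 2^n/(8 * 4^k)) / 2^n := by
    field_simp
  rw [abs_neg, e, abs_div, abs_of_pos (show (0:ℝ) < 2^n by positivity), div_le_iff₀ (by positivity)]
  refine this.trans (le_of_eq ?_)
  field_simp

lemma B5_aux (n : ℕ) (σ : Fin n → Bool) (k m : ℕ) (hk : n ≤ k) :
    |-(hS n σ (fun x => 1 - x) (tent k m) / 2^n - 1/(8 * 4^k))| ≤ 1/4^k := by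
  rw [hS_int _ _ _ _ _ hk, zero_div, zero_sub, neg_neg,
    abs_of_pos (show (0:ℝ) < 1/(8 * 4^k) by positivity)]
  gcongr
  have : (0:ℝ) < 4^k := by positivity
  linarith

lemma tent_floor (j m : ℕ) (z : ℝ) (h : tent j m z ≠ 0) : ⌊z * 2^j⌋₊ = m := by
  have h1 : 0 < z * 2^j - m := by
    by_contra hc
    exact h (by unfold tent; rw [tau_neg (by linarith), zero_div])
  have h2 : z * 2^j - m < 1 := by
    by_contra hc
    exact h (by unfold tent; rw [tau_big (by linarith), zero_div])
  have : (0:ℝ) ≤ m := by positivity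
  rw [Nat.floor_eq_iff (by linarith)]
  constructor <;> linarith

/-- indices of boxes containing relevant points -/
noncomputable def badS (n : ℕ) (σ : Fin n → Bool) (j1 j2 : ℕ) : Finset (ℕ × ℕ) :=
  Finset.univ.image (fun t : Fin n → Bool =>
    (⌊(hammersleyShifted n σ t).1 * 2^j1⌋₊, ⌊(hammersleyShifted n σ t).2 * 2^j2⌋₊))

lemma badS_card (n : ℕ) (σ : Fin n → Bool) (j1 j2 : ℕ) : (badS n σ j1 j2).card ≤ 2^n := by
  refine Finset.card_image_le.trans ?_
  simp

lemma badS_spec (n : ℕ) (σ : Fin n → Bool) (j1 j2 m1 m2 : ℕ) (h : (m1, m2) ∉ badS n σ j1 j2) :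
    hS n σ (tent j1 m1) (tent j2 m2) = 0 := by
  unfold hS
  refine Finset.sum_eq_zero fun t _ => ?_
  by_contra hc
  rw [mul_eq_zero, not_or] at hc
  apply h
  unfold badS
  rw [Finset.mem_image]
  exact ⟨t, Finset.mem_univ _, by rw [tent_floor _ _ _ hc.1, tent_floor _ _ _ hc.2]⟩

lemma dyadicI_eq (j : ℤ) (m : ℕ) (hm : m < 2^j.toNat) :
    dyadicI j m = Set.Ico ((m : ℝ) / 2 ^ j.toNat) ((m + 1 : ℝ) / 2 ^ j.toNat) := by
  unfold dyadicI
  split_ifs with h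
  · subst h
    obtain rfl : m = 0 := by simpa using hm
    simp
  · rfl

lemma mem_dyadic (J m : ℕ) (x : ℝ) (h : x ∈ Set.Ico ((m : ℝ) / 2 ^ J) ((m + 1 : ℝ) / 2 ^ J)) :
    ⌊x * 2^J⌋₊ = m := by
  obtain ⟨h1, h2⟩ := h
  rw [div_le_iff₀ (by positivity)] at h1
  rw [lt_div_iff₀ (by positivity)] at h2
  have : (0:ℝ) ≤ m := by positivity
  rw [Nat.floor_eq_iff (by linarith)]
  exact ⟨h1, h2⟩

lemma disj_sum {α ι : Type*} (s : Finset ι) (A : ι → Set α) (c : ι → ℝ) (hc : ∀ i, 0 ≤ c i)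
    (r : ℝ) (hr : 0 < r) (x : α) (hd : ∀ i ∈ s, ∀ j ∈ s, x ∈ A i → x ∈ A j → i = j) :
    |∑ i ∈ s, c i * (A i).indicator (fun _ => (1:ℝ)) x| ^ r =
      ∑ i ∈ s, c i ^ r * (A i).indicator (fun _ => (1:ℝ)) x := by
  by_cases h : ∃ i ∈ s, x ∈ A i
  · obtain ⟨i, hi, hx⟩ := h
    have z : ∀ j ∈ s, j ≠ i → x ∉ A j := fun j hj hji hx' => hji (hd j hj i hi hx' hx)
    rw [Finset.sum_eq_single_of_mem i hi, Finset.sum_eq_single_of_mem i hi]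
    · simp [hx, abs_of_nonneg (hc i)]
    · intro j hj hji; simp [z j hj hji]
    · intro j hj hji; simp [z j hj hji]
  · push Not at h
    rw [Finset.sum_eq_zero, Finset.sum_eq_zero, abs_zero, Real.zero_rpow hr.ne']
    · intro j hj; simp [h j hj]
    · intro j hj; simp [h j hj]

lemma vol_box (J1 J2 m1 m2 : ℕ) (h1 : m1 < 2^J1) (h2 : m2 < 2^J2) :
    ∫ x in Set.Icc (0 : ℝ × ℝ) 1, (Set.Ico ((m1 : ℝ) / 2 ^ J1) ((m1 + 1 : ℝ) / 2 ^ J1) ×ˢ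
      Set.Ico ((m2 : ℝ) / 2 ^ J2) ((m2 + 1 : ℝ) / 2 ^ J2)).indicator (fun _ => (1:ℝ)) x = 1/2^(J1+J2) := by
  rw [setIntegral_indicator (measurableSet_Ico.prod measurableSet_Ico)]
  have hb : ∀ J m : ℕ, m < 2^J → Set.Ico ((m : ℝ) / 2 ^ J) ((m + 1 : ℝ) / 2 ^ J) ⊆ Set.Icc 0 1 := by
    intro J m hm x ⟨hx1, hx2⟩
    have : (m:ℝ) + 1 ≤ 2^J := by exact_mod_cast hm
    have h3 : (0:ℝ) ≤ m / 2^J := by positivity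
    have h4 : (m + 1 : ℝ)/2^J ≤ 1 := by rw [div_le_one (by positivity)]; exact this
    exact ⟨by linarith, by linarith⟩
  have s : Set.Icc (0 : ℝ × ℝ) 1 ∩ (Set.Ico ((m1 : ℝ) / 2 ^ J1) ((m1 + 1 : ℝ) / 2 ^ J1) ×ˢ
      Set.Ico ((m2 : ℝ) / 2 ^ J2) ((m2 + 1 : ℝ) / 2 ^ J2)) = (Set.Ico ((m1 : ℝ) / 2 ^ J1) ((m1 + 1 : ℝ) / 2 ^ J1) ×ˢ
      Set.Ico ((m2 : ℝ) / 2 ^ J2) ((m2 + 1 : ℝ) / 2 ^ J2)) := by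
    apply Set.inter_eq_right.2
    have : Set.Icc (0 : ℝ × ℝ) 1 = Set.Icc (0:ℝ) 1 ×ˢ Set.Icc (0:ℝ) 1 := by
      rw [Set.Icc_prod_Icc]; rfl
    rw [this]
    exact Set.prod_mono (hb J1 m1 h1) (hb J2 m2 h2)
  rw [s, setIntegral_const, smul_eq_mul, mul_one, Measure.volume_eq_prod, measureReal_prod_prod]
  rw [Real.volume_real_Ico_of_le (by gcongr; linarith), Real.volume_real_Ico_of_le (by gcongr; linarith), pow_add]
  field_simp
  ring

lemma term_eq (p : ℝ) (hp : 0 < p) {ι : Type*} [Fintype ι] (P : ι → ℝ × ℝ) (j1 j2 : ℤ) :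
    lpHalfTerm p P (j1, j2) = 2^(2 * (j1.toNat + j2.toNat)) *
      (∑ m ∈ Finset.range (2^j1.toNat) ×ˢ Finset.range (2^j2.toNat),
        |haarCoeff P (j1, j2) m| ^ p * (1 / 2^(j1.toNat + j2.toNat))) ^ (2/p) := by
  unfold lpHalfTerm
  congr 2
  simp only [← Finset.sum_product']
  set s := Finset.range (2^j1.toNat) ×ˢ Finset.range (2^j2.toNat) with hs
  have key : ∀ x : ℝ × ℝ, |∑ m ∈ s, haarCoeff P (j1, j2) (m.1, m.2) ^ 2 *
      (dyadicI j1 m.1 ×ˢ dyadicI j2 m.2).indicator (fun _ => (1:ℝ)) x| ^ (p/2) =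
      ∑ m ∈ s, |haarCoeff P (j1, j2) m| ^ p *
        (Set.Ico ((m.1 : ℝ) / 2 ^ j1.toNat) ((m.1 + 1 : ℝ) / 2 ^ j1.toNat) ×ˢ
          Set.Ico ((m.2 : ℝ) / 2 ^ j2.toNat) ((m.2 + 1 : ℝ) / 2 ^ j2.toNat)).indicator (fun _ => (1:ℝ)) x := by
    intro x
    rw [disj_sum s (fun m => dyadicI j1 m.1 ×ˢ dyadicI j2 m.2) (fun m => haarCoeff P (j1, j2) (m.1, m.2) ^ 2)
      (fun _ => sq_nonneg _) (p/2) (by positivity) x]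
    · refine Finset.sum_congr rfl fun m hm => ?_
      rw [hs, Finset.mem_product, Finset.mem_range, Finset.mem_range] at hm
      rw [dyadicI_eq _ _ hm.1, dyadicI_eq _ _ hm.2]
      congr 1
      rw [← sq_abs, ← Real.rpow_natCast, ← Real.rpow_mul (abs_nonneg _)]
      congr 1
      push_cast; ring
    · intro m hm m' hm' h h'
      rw [hs, Finset.mem_product, Finset.mem_range, Finset.mem_range] at hm hm'
      rw [dyadicI_eq _ _ hm.1, dyadicI_eq _ _ hm.2] at h
      rw [dyadicI_eq _ _ hm'.1, dyadicI_eq _ _ hm'.2] at h'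
      ext
      · rw [← mem_dyadic _ _ _ h.1, ← mem_dyadic _ _ _ h'.1]
      · rw [← mem_dyadic _ _ _ h.2, ← mem_dyadic _ _ _ h'.2]
  simp only [key]
  rw [integral_finsetSum]
  · refine Finset.sum_congr rfl fun m hm => ?_
    rw [hs, Finset.mem_product, Finset.mem_range, Finset.mem_range] at hm
    rw [integral_const_mul, vol_box _ _ _ _ hm.1 hm.2]
  · intro m _
    apply Integrable.const_mul
    rw [sq_restrict]
    refine Integrable.of_bound (C := 1) ?_ (Filter.Eventually.of_forall fun t => ?_)
    · exact (measurable_const.indicator (measurableSet_Ico.prod measurableSet_Ico)).aestronglyMeasurable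
    · simp only [Set.indicator]; split_ifs <;> simp

lemma quarter_pow (n : ℕ) : (1/4:ℝ)^n = 1/4^n := by rw [one_div_pow]

lemma card_s (J1 J2 : ℕ) : ((Finset.range (2^J1) ×ˢ Finset.range (2^J2)).card : ℝ) = 2^(J1+J2) := by
  rw [Finset.card_product, Finset.card_range, Finset.card_range, pow_add]; push_cast; rfl

lemma rpow_two_div (p : ℝ) (hp : 0 < p) (M : ℝ) (hM : 0 ≤ M) : (M^p)^(2/p) = M^2 := by
  rw [← Real.rpow_mul hM, mul_div_cancel₀ _ hp.ne', Real.rpow_two]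

lemma T1 (p : ℝ) (hp : 0 < p) {ι : Type*} [Fintype ι] (P : ι → ℝ × ℝ) (j1 j2 : ℤ) (M : ℝ) (hM : 0 ≤ M)
    (h : ∀ m1 m2, m1 < 2^j1.toNat → m2 < 2^j2.toNat → |haarCoeff P (j1, j2) (m1, m2)| ≤ M) :
    lpHalfTerm p P (j1, j2) ≤ 4^(j1.toNat + j2.toNat) * M^2 := by
  rw [term_eq p hp, pow_mul, ← rpow_two_div p hp M hM]
  norm_num only
  gcongr
  rw [← Finset.sum_mul]
  calc _ ≤ (∑ m ∈ Finset.range (2^j1.toNat) ×ˢ Finset.range (2^j2.toNat), M^p) * (1 / 2^(j1.toNat + j2.toNat)) := by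
        gcongr with m hm
        rw [Finset.mem_product, Finset.mem_range, Finset.mem_range] at hm
        exact h _ _ hm.1 hm.2
    _ = M^p := by
        rw [Finset.sum_const, nsmul_eq_mul, card_s]; field_simp

lemma add_rpow_le' (x y q : ℝ) (hx : 0 ≤ x) (hy : 0 ≤ y) (hq : 0 ≤ q) :
    (x + y)^q ≤ 2^q * (x^q + y^q) := by
  have hxq := Real.rpow_nonneg hx q
  have hyq := Real.rpow_nonneg hy q
  have h2 : (0:ℝ) ≤ 2^q := by positivity
  rcases le_total x y with h | h
  · calc (x+y)^q ≤ (2*y)^q := by gcongr; linarith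
      _ = 2^q * y^q := Real.mul_rpow (by norm_num) hy
      _ ≤ _ := by gcongr; linarith
  · calc (x+y)^q ≤ (2*x)^q := by gcongr; linarith
      _ = 2^q * x^q := Real.mul_rpow (by norm_num) hx
      _ ≤ _ := by gcongr; linarith

lemma T2 (p : ℝ) (hp : 0 < p) {ι : Type*} [Fintype ι] (P : ι → ℝ × ℝ) (j1 j2 : ℤ) (n : ℕ) (B : Finset (ℕ × ℕ))
    (hB : B.card ≤ 2^n) (M G : ℝ) (hM : 0 ≤ M) (hG : 0 ≤ G)
    (h : ∀ m1 m2, m1 < 2^j1.toNat → m2 < 2^j2.toNat → |haarCoeff P (j1, j2) (m1, m2)| ≤ M)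
    (h' : ∀ m1 m2, m1 < 2^j1.toNat → m2 < 2^j2.toNat → (m1, m2) ∉ B → |haarCoeff P (j1, j2) (m1, m2)| ≤ G) :
    lpHalfTerm p P (j1, j2) ≤ 4^(j1.toNat + j2.toNat) *
      (2^(2/p) * (G^2 + (2^n / 2^(j1.toNat + j2.toNat))^(2/p) * M^2)) := by
  rw [term_eq p hp, pow_mul]
  norm_num only
  gcongr
  rw [← Finset.sum_mul]
  have hMp := Real.rpow_nonneg hM p
  have hGp := Real.rpow_nonneg hG p
  set s := Finset.range (2^j1.toNat) ×ˢ Finset.range (2^j2.toNat) with hs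
  have key : ∑ m ∈ s, |haarCoeff P (j1, j2) m| ^ p ≤ 2^(j1.toNat + j2.toNat) * G^p + 2^n * M^p := by
    calc _ ≤ ∑ m ∈ s, (G^p + if m ∈ B then M^p else 0) := by
          refine Finset.sum_le_sum fun m hm => ?_
          rw [hs, Finset.mem_product, Finset.mem_range, Finset.mem_range] at hm
          split_ifs with hb
          · have : |haarCoeff P (j1, j2) m| ^ p ≤ M^p :=
              Real.rpow_le_rpow (abs_nonneg _) (h _ _ hm.1 hm.2) hp.le
            linarith
          · have : |haarCoeff P (j1, j2) m| ^ p ≤ G^p :=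
              Real.rpow_le_rpow (abs_nonneg _) (h' _ _ hm.1 hm.2 hb) hp.le
            linarith
      _ = 2^(j1.toNat + j2.toNat) * G^p + ∑ m ∈ s.filter (· ∈ B), M^p := by
          rw [Finset.sum_add_distrib, Finset.sum_const, nsmul_eq_mul, card_s, Finset.sum_filter]
      _ ≤ _ := by
          rw [Finset.sum_const, nsmul_eq_mul]
          gcongr
          have : (s.filter (· ∈ B)).card ≤ 2^n :=
            (Finset.card_le_card (fun m hm => (Finset.mem_filter.1 hm).2)).trans hB
          exact_mod_cast this
  calc _ ≤ (G^p + (2^n / 2^(j1.toNat + j2.toNat)) * M^p)^(2/p) := by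
        gcongr
        calc _ ≤ (2^(j1.toNat + j2.toNat) * G^p + 2^n * M^p) * (1 / 2^(j1.toNat + j2.toNat)) := by gcongr
          _ = _ := by field_simp
    _ ≤ 2^(2/p) * ((G^p)^(2/p) + ((2^n / 2^(j1.toNat + j2.toNat)) * M^p)^(2/p)) :=
        add_rpow_le' _ _ _ hGp (by positivity) (by positivity)
    _ = _ := by
        rw [Real.mul_rpow (by positivity) hMp, rpow_two_div p hp _ hM, rpow_two_div p hp _ hG]

lemma lp_nonneg (p : ℝ) (hp : 0 < p) {ι : Type*} [Fintype ι] (P : ι → ℝ × ℝ) (j1 j2 : ℤ) :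
    0 ≤ lpHalfTerm p P (j1, j2) := by
  rw [term_eq p hp]
  positivity

section terms
variable (p : ℝ) (hp : 0 < p) (n : ℕ) (σ : Fin n → Bool)

lemma E00 (hp : 0 < p) (hn : 0 < n) (c : ℝ) (hc : 0 ≤ c) (h : |2 * (zeroCount σ : ℝ) - n| ≤ c * Real.sqrt n) :
    lpHalfTerm p (hammersleyShifted n σ) (-1, -1) ≤ (c+1)^2 * n * (1/4)^n := by
  refine (T1 p hp _ (-1) (-1) ((c + 1) * Real.sqrt n / 2^n) (by positivity) ?_).trans (le_of_eq ?_)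
  · intro m1 m2 h1 h2
    obtain rfl : m1 = 0 := by simpa using h1
    obtain rfl : m2 = 0 := by simpa using h2
    exact B00 n hn σ c h
  · rw [div_pow, mul_pow, Real.sq_sqrt (by positivity), quarter_pow, four_pow n]
    simp; field_simp

lemma EL_aux (hp : 0 < p) (k : ℕ) (j1 j2 : ℤ) (hJ : j1.toNat + j2.toNat = k) (P : (Fin n → Bool) → ℝ × ℝ)
    (h1 : ∀ m1 m2, m1 < 2^j1.toNat → m2 < 2^j2.toNat → k ≤ n → |haarCoeff P (j1, j2) (m1, m2)| ≤ 1/(2^n*2^k))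
    (h2 : ∀ m1 m2, m1 < 2^j1.toNat → m2 < 2^j2.toNat → n ≤ k → |haarCoeff P (j1, j2) (m1, m2)| ≤ 1/4^k) :
    lpHalfTerm p P (j1, j2) ≤ (1/4)^n * (if k < n then 1 else (1/4)^(k-n)) := by
  split_ifs with h
  · refine (T1 p hp _ j1 j2 (1/(2^n*2^k)) (by positivity) (fun m1 m2 a b => h1 m1 m2 a b h.le)).trans (le_of_eq ?_)
    rw [hJ, quarter_pow, four_pow k, four_pow n, mul_one]
    field_simp
  · refine (T1 p hp _ j1 j2 (1/4^k) (by positivity) (fun m1 m2 a b => h2 m1 m2 a b (not_lt.1 h))).trans (le_of_eq ?_)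
    rw [hJ, ← pow_add, Nat.add_sub_cancel' (not_lt.1 h), quarter_pow]
    field_simp

lemma E0k (hp : 0 < p) (k : ℕ) :
    lpHalfTerm p (hammersleyShifted n σ) (-1, (k:ℤ)) ≤ (1/4)^n * (if k < n then 1 else (1/4)^(k-n)) := by
  refine EL_aux p n hp k (-1) k (by simp) _ ?_ ?_
  · intro m1 m2 h1 h2 hk
    obtain rfl : m1 = 0 := by simpa using h1
    simp only [Int.toNat_natCast] at h2
    rw [mu_left _ _ _ _ h2]
    exact B4_aux n σ k m2 h2 hk
  · intro m1 m2 h1 h2 hk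
    obtain rfl : m1 = 0 := by simpa using h1
    simp only [Int.toNat_natCast] at h2
    rw [mu_left _ _ _ _ h2]
    exact B5_aux n σ k m2 hk

lemma Ek0 (hp : 0 < p) (k : ℕ) :
    lpHalfTerm p (hammersleyShifted n σ) ((k:ℤ), -1) ≤ (1/4)^n * (if k < n then 1 else (1/4)^(k-n)) := by
  refine EL_aux p n hp k k (-1) (by simp) _ ?_ ?_
  · intro m2 m1 h2 h1 hk
    obtain rfl : m1 = 0 := by simpa using h1
    simp only [Int.toNat_natCast] at h2
    rw [mu_right _ _ _ _ h2]
    exact B4_aux n _ k m2 h2 hk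
  · intro m2 m1 h2 h1 hk
    obtain rfl : m1 = 0 := by simpa using h1
    simp only [Int.toNat_natCast] at h2
    rw [mu_right _ _ _ _ h2]
    exact B5_aux n _ k m2 hk

lemma Ebig (hp : 0 < p) (j1 j2 : ℕ) (h : n ≤ j1) :
    lpHalfTerm p (hammersleyShifted n σ) ((j1:ℤ), (j2:ℤ)) ≤ (1/4)^(j1+j2) := by
  refine (T1 p hp _ j1 j2 (1/4^(j1+j2)) (by positivity) ?_).trans (le_of_eq ?_)
  · intro m1 m2 h1 h2
    simp only [Int.toNat_natCast] at h1 h2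
    refine B2' n σ j1 j2 m1 m2 h1 h2 ?_
    rw [hS_swap]
    exact hS_int _ _ _ _ _ h
  · simp only [Int.toNat_natCast]
    rw [quarter_pow]; field_simp

lemma Eint (hp : 0 < p) (ρ : ℝ) (h4 : 1/4 ≤ ρ) (hρ : (1/2:ℝ)^(2/p) ≤ ρ) (j1 j2 : ℕ) :
    lpHalfTerm p (hammersleyShifted n σ) ((j1:ℤ), (j2:ℤ)) ≤
      (2^(2/p) * (4 + 2^(2/p)) * 4) * ((1/4)^n * ρ^((n - (j1+j2)) + (j1 + j2 - n))) := by
  have hρ0 : 0 < ρ := by linarith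
  set Q : ℝ := 2^(2/p) with hQ
  have hQ1 : 1 ≤ Q := Real.one_le_rpow (by norm_num) (by positivity)
  rcases le_or_gt (j1 + j2 + 2) n with hl | hl
  · refine (T1 p hp _ j1 j2 (1/4^n) (by positivity) ?_).trans ?_
    · intro m1 m2 h1 h2
      simp only [Int.toNat_natCast] at h1 h2
      exact B1 n σ j1 j2 m1 m2 h1 h2 hl
    simp only [Int.toNat_natCast]
    obtain ⟨d, rfl⟩ : ∃ d, n = j1 + j2 + d := ⟨n - (j1+j2), by omega⟩
    have e : (4:ℝ)^(j1+j2) * (1/4^(j1+j2+d))^2 = (1/4)^(j1+j2+d) * (1/4)^d := by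
      rw [quarter_pow, quarter_pow, pow_add 4 (j1+j2) d]; field_simp
    rw [e, show j1 + j2 + d - (j1+j2) + (j1 + j2 - (j1+j2+d)) = d by omega]
    have : (1/4:ℝ)^(j1+j2+d) * (1/4)^d ≤ (1/4)^(j1+j2+d) * ρ^d := by gcongr
    refine this.trans (le_mul_of_one_le_left (by positivity) ?_)
    nlinarith
  · have hl' : n ≤ j1 + j2 + 1 := by omega
    refine (T2 p hp _ j1 j2 n (badS n σ j1 j2) (badS_card n σ j1 j2) (1/(2^n*2^(j1+j2))) (1/4^(j1+j2))
      (by positivity) (by positivity) ?_ ?_).trans ?_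
    · intro m1 m2 h1 h2
      simp only [Int.toNat_natCast] at h1 h2
      exact B2 n σ j1 j2 m1 m2 h1 h2 hl'
    · intro m1 m2 h1 h2 hb
      simp only [Int.toNat_natCast] at h1 h2
      exact B2' n σ j1 j2 m1 m2 h1 h2 (badS_spec n σ j1 j2 m1 m2 hb)
    simp only [Int.toNat_natCast]
    rw [← hQ]
    set l := j1 + j2 with hl0
    have e : (4:ℝ)^l * (Q * ((1/4^l)^2 + (2^n/2^l)^(2/p) * (1/(2^n*2^l))^2)) =
        Q * ((1/4)^l + (2^n/2^l)^(2/p) * (1/4)^n) := by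
      rw [quarter_pow l, quarter_pow n, four_pow l, four_pow n]; field_simp
    rw [e]
    rcases le_or_gt n l with h | h
    · obtain ⟨d, hd⟩ : ∃ d, l = n + d := ⟨l - n, by omega⟩
      rw [hd, show n - (n+d) + (n + d - n) = d by omega]
      have e2 : ((2:ℝ)^n/2^(n+d))^(2/p) ≤ ρ^d := by
        have : (2:ℝ)^n/2^(n+d) = (1/2)^d := by rw [pow_add, one_div_pow]; field_simp
        rw [this, ← Real.rpow_natCast, ← Real.rpow_mul (by norm_num), mul_comm, Real.rpow_mul (by norm_num),
          Real.rpow_natCast]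
        gcongr
      have e3 : (1/4:ℝ)^(n+d) ≤ (1/4)^n * ρ^d := by rw [pow_add]; gcongr
      have z : 0 < (1/4:ℝ)^n := by positivity
      have z2 : 0 < ρ^d := by positivity
      calc _ ≤ Q * ((1/4)^n * ρ^d + ρ^d * (1/4)^n) := by gcongr
        _ = (Q * 2) * ((1/4)^n * ρ^d) := by ring
        _ ≤ _ := by
          gcongr ?_ * _
          nlinarith
    · obtain rfl : n = l + 1 := by omega
      rw [show l + 1 - l + (l - (l+1)) = 1 by omega]
      have e2 : ((2:ℝ)^(l+1)/2^l)^(2/p) = Q := by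
        rw [pow_succ, mul_div_cancel_left₀ _ (by positivity)]
      rw [e2, pow_one]
      have z : 0 < (1/4:ℝ)^(l+1) := by positivity
      have e3 : (1/4:ℝ)^l = 4 * (1/4)^(l+1) := by rw [pow_succ]; ring
      rw [e3]
      calc _ = Q * (4 + Q) * ((1/4)^(l+1) * 1) := by ring
        _ ≤ Q * (4 + Q) * ((1/4)^(l+1) * (4 * ρ)) := by gcongr; linarith
        _ = _ := by ring

end terms

lemma G1 (ρ : ℝ) (h0 : 0 < ρ) (h1 : ρ < 1) (n A : ℕ) :
    ∑ k ∈ Finset.range A, (if k < n then 0 else ρ^(k-n)) ≤ 1/(1-ρ) := by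
  have h : ∑ k ∈ Finset.range A, (if k < n then 0 else ρ^(k-n)) ≤ (1 - ρ^(A-n))/(1-ρ) := by
    induction A with
    | zero => simp
    | succ A ih =>
      rw [Finset.sum_range_succ]
      split_ifs with h
      · rw [show A + 1 - n = A - n by omega, add_zero]; exact ih
      · rw [show A + 1 - n = (A - n) + 1 by omega, pow_succ]
        have : (1 - ρ^(A-n) * ρ)/(1-ρ) = (1 - ρ^(A-n))/(1-ρ) + ρ^(A-n) := by
          have : 1 - ρ ≠ 0 := by linarith
          field_simp; ring
        rw [this]
        linarith
  refine h.trans ?_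
  have : 0 < 1 - ρ := by linarith
  gcongr
  have : 0 ≤ ρ^(A-n) := by positivity
  linarith

lemma G2 (ρ : ℝ) (h0 : 0 < ρ) (h1 : ρ < 1) (n A : ℕ) :
    ∑ k ∈ Finset.range A, (if k ≤ n then ρ^(n-k) else 0) ≤ 1/(1-ρ) := by
  have hr : 0 < 1 - ρ := by linarith
  have h : ∑ k ∈ Finset.range A, (if k ≤ n then ρ^(n-k) else 0) ≤ ρ^(n+1-A)/(1-ρ) := by
    induction A with
    | zero => simp; positivity
    | succ A ih =>
      rw [Finset.sum_range_succ]
      split_ifs with h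
      · rw [show n + 1 - A = (n - A) + 1 by omega, pow_succ] at ih
        rw [show n + 1 - (A + 1) = n - A by omega]
        have : ρ^(n-A)/(1-ρ) = (ρ^(n-A) * ρ)/(1-ρ) + ρ^(n-A) := by
          field_simp; ring
        rw [this]
        linarith
      · rw [show n + 1 - (A+1) = n + 1 - A by omega, add_zero]; exact ih
  refine h.trans ?_
  gcongr
  exact pow_le_one₀ h0.le h1.le

lemma G3 (n A : ℕ) :
    ∑ k ∈ Finset.range A, (if k < n then (1:ℝ) else (1/4)^(k-n)) ≤ n + 2 := by
  have a : ∑ k ∈ Finset.range A, (if k < n then (1:ℝ) else 0) ≤ n := by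
    have : ∑ k ∈ Finset.range A, (if k < n then (1:ℝ) else 0) ≤ (min A n : ℕ) := by
      induction A with
      | zero => simp
      | succ A ih =>
        rw [Finset.sum_range_succ]
        split_ifs with h
        · rw [show min (A+1) n = min A n + 1 by omega]; push_cast at ih ⊢; linarith
        · rw [show min (A+1) n = min A n by omega, add_zero]; exact ih
    refine this.trans ?_
    exact_mod_cast min_le_right _ _
  have b := G1 (1/4) (by norm_num) (by norm_num) n A
  have : ∀ k, (if k < n then (1:ℝ) else (1/4)^(k-n)) = (if k < n then (1:ℝ) else 0) + (if k < n then (0:ℝ) else (1/4)^(k-n)) := by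
    intro k; split_ifs <;> simp
  simp only [this]
  rw [Finset.sum_add_distrib]
  have b' : (1:ℝ)/(1-1/4) ≤ 2 := by norm_num
  linarith

lemma G4 (ρ : ℝ) (h0 : 0 < ρ) (h1 : ρ < 1) (n A : ℕ) :
    ∑ k ∈ Finset.range A, ρ^((n-k)+(k-n)) ≤ 2/(1-ρ) := by
  calc _ ≤ ∑ k ∈ Finset.range A, ((if k ≤ n then ρ^(n-k) else 0) + (if k < n then 0 else ρ^(k-n))) := by
        refine Finset.sum_le_sum fun k _ => ?_
        rcases lt_trichotomy k n with h | h | h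
        · simp [h, h.le, Nat.sub_eq_zero_of_le h.le]
        · subst h; simp
        · simp [h.not_gt, h.not_ge, Nat.sub_eq_zero_of_le h.le]
    _ ≤ _ := by
        rw [Finset.sum_add_distrib]
        have := G1 ρ h0 h1 n A
        have := G2 ρ h0 h1 n A
        rw [show (2:ℝ)/(1-ρ) = 1/(1-ρ) + 1/(1-ρ) by ring]
        linarith

lemma total_bound (p : ℝ) (hp : 0 < p) (ρ : ℝ) (h4 : 1/4 ≤ ρ) (hρ : (1/2:ℝ)^(2/p) ≤ ρ) (hρ1 : ρ < 1)
    (c : ℝ) (hc : 0 ≤ c) (n : ℕ) (hn : 0 < n) (σ : Fin n → Bool)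
    (h : |2 * (zeroCount σ : ℝ) - n| ≤ c * Real.sqrt n) (A : ℕ) :
    ∑ k1 ∈ Finset.range (A+1), ∑ k2 ∈ Finset.range (A+1),
      lpHalfTerm p (hammersleyShifted n σ) ((k1 : ℤ) - 1, (k2 : ℤ) - 1) ≤
    ((c+1)^2 + 3 + 3 * (3 + (2^(2/p) * (4 + 2^(2/p)) * 4) * (2/(1-ρ)))) * n * (1/4)^n := by
  set K : ℝ := 2^(2/p) * (4 + 2^(2/p)) * 4 with hK
  have hK0 : 0 ≤ K := by positivity
  have hr : 0 < 1 - ρ := by linarith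
  have hρ0 : 0 < ρ := by linarith
  set W : ℝ := 3 + K * (2/(1-ρ)) with hW
  have hKW : 0 ≤ K * (2/(1-ρ)) := by positivity
  have d0 : (0:ℝ) < (1/4)^n := by positivity
  have cast1 : ∀ k : ℕ, ((k+1 : ℕ) : ℤ) - 1 = k := by intro k; push_cast; ring
  have cast0 : ((0 : ℕ) : ℤ) - 1 = -1 := by norm_num
  rw [Finset.sum_range_succ']
  simp only [Finset.sum_range_succ' _ A, cast1, cast0]
  have row0 : ∑ k ∈ Finset.range A, lpHalfTerm p (hammersleyShifted n σ) (-1, (k:ℤ)) ≤ (1/4)^n * (n+2) := by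
    refine (Finset.sum_le_sum fun k _ => E0k p n σ hp k).trans ?_
    rw [← Finset.mul_sum]
    gcongr
    exact G3 n A
  have r00 := E00 p n σ hp hn c hc h
  have row : ∀ j : ℕ, ∑ k ∈ Finset.range A, lpHalfTerm p (hammersleyShifted n σ) ((j:ℤ), (k:ℤ)) +
      lpHalfTerm p (hammersleyShifted n σ) ((j:ℤ), -1) ≤
      W * (1/4)^n * (if j < n then 1 else (1/4)^(j-n)) := by
    intro j
    have a := Ek0 p n σ hp j
    split_ifs at a ⊢ with hj
    · have b : ∑ k ∈ Finset.range A, lpHalfTerm p (hammersleyShifted n σ) ((j:ℤ), (k:ℤ)) ≤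
          K * ((1/4)^n * (2/(1-ρ))) := by
        refine (Finset.sum_le_sum fun k _ => Eint p n σ hp ρ h4 hρ j k).trans ?_
        rw [← Finset.mul_sum, ← Finset.mul_sum]
        gcongr
        refine le_trans (le_of_eq ?_) (G4 ρ hρ0 hρ1 (n - j) A)
        refine Finset.sum_congr rfl fun k _ => ?_
        congr 1
        omega
      rw [hW]
      nlinarith
    · push Not at hj
      have e : (1/4:ℝ)^n * (1/4)^(j-n) = (1/4)^j := by rw [← pow_add]; congr 1; omega
      have b : ∑ k ∈ Finset.range A, lpHalfTerm p (hammersleyShifted n σ) ((j:ℤ), (k:ℤ)) ≤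
          (1/4)^j * 2 := by
        refine (Finset.sum_le_sum fun k _ => Ebig p n σ hp j k hj).trans ?_
        simp only [pow_add]
        rw [← Finset.mul_sum]
        gcongr
        have := G1 (1/4) (by norm_num) (by norm_num) 0 A
        norm_num at this ⊢
        linarith
      rw [mul_assoc, e]
      rw [e] at a
      have : (0:ℝ) < (1/4)^j := by positivity
      rw [hW]
      nlinarith
  have rows : ∑ j ∈ Finset.range A, (∑ k ∈ Finset.range A, lpHalfTerm p (hammersleyShifted n σ) ((j:ℤ), (k:ℤ)) +
      lpHalfTerm p (hammersleyShifted n σ) ((j:ℤ), -1)) ≤ W * (1/4)^n * (n+2) := by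
    refine (Finset.sum_le_sum fun j _ => row j).trans ?_
    rw [← Finset.mul_sum]
    gcongr
    exact G3 n A
  have hn1 : (1:ℝ) ≤ n := by exact_mod_cast hn
  have f1 : W * (1/4)^n * (n+2) ≤ W * (1/4)^n * (3 * n) := by gcongr; linarith
  have f2 : (1/4:ℝ)^n * (n+2) ≤ (1/4)^n * (3 * n) := by gcongr; linarith
  refine (add_le_add rows (add_le_add row0 r00)).trans ?_
  refine (add_le_add f1 (add_le_add_left f2 _)).trans (le_of_eq ?_)
  ring

/-- For balanced shifts, the full sum over shapes `j ∈ ℕ_{-1}²` (encoded by `k ∈ ℕ²`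
via `j = k - (1,1)`) of the `L_{p/2}`-norm terms is `≪_{p,c} n / 2^{2n}`. -/
theorem statement19 (p : ℝ) (hp : 1 < p) (c : ℝ) (hc : 0 ≤ c) :
    ∃ C : ℝ, 0 < C ∧ ∀ n : ℕ, 0 < n → ∀ σ : Fin n → Bool,
      |2 * (zeroCount σ : ℝ) - n| ≤ c * Real.sqrt n →
      Summable (fun k : ℕ × ℕ =>
        lpHalfTerm p (hammersleyShifted n σ) ((k.1 : ℤ) - 1, (k.2 : ℤ) - 1)) ∧
      (∑' k : ℕ × ℕ,
          lpHalfTerm p (hammersleyShifted n σ) ((k.1 : ℤ) - 1, (k.2 : ℤ) - 1)) ≤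
        C * n / 2 ^ (2 * n) := by

  have hp0 : 0 < p := by linarith
  obtain ⟨ρ, h4, hρ, hρ1⟩ : ∃ ρ : ℝ, 1/4 ≤ ρ ∧ (1/2:ℝ)^(2/p) ≤ ρ ∧ ρ < 1 := by
    refine ⟨max (1/4) ((1/2)^(2/p)), le_max_left _ _, le_max_right _ _, max_lt (by norm_num) ?_⟩
    exact Real.rpow_lt_one (by norm_num) (by norm_num) (by positivity)
  have hr : 0 < 1 - ρ := by linarith
  refine ⟨(c+1)^2 + 3 + 3 * (3 + (2^(2/p) * (4 + 2^(2/p)) * 4) * (2/(1-ρ))), by positivity, ?_⟩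
  intro n hn σ h
  have hnn : ∀ k : ℕ × ℕ, 0 ≤ lpHalfTerm p (hammersleyShifted n σ) ((k.1 : ℤ) - 1, (k.2 : ℤ) - 1) :=
    fun k => lp_nonneg p hp0 _ _ _
  have key : ∀ u : Finset (ℕ × ℕ), ∑ k ∈ u,
      lpHalfTerm p (hammersleyShifted n σ) ((k.1 : ℤ) - 1, (k.2 : ℤ) - 1) ≤
      ((c+1)^2 + 3 + 3 * (3 + (2^(2/p) * (4 + 2^(2/p)) * 4) * (2/(1-ρ)))) * n / 2^(2*n) := by
    intro u
    obtain ⟨A, hA⟩ : ∃ A : ℕ, u ⊆ Finset.range (A+1) ×ˢ Finset.range (A+1) := by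
      refine ⟨u.sup (fun k => k.1 + k.2), fun k hk => ?_⟩
      have := Finset.le_sup (f := fun k : ℕ × ℕ => k.1 + k.2) hk
      rw [Finset.mem_product, Finset.mem_range, Finset.mem_range]
      omega
    refine (Finset.sum_le_sum_of_subset_of_nonneg hA (fun k _ _ => hnn k)).trans ?_
    rw [Finset.sum_product]
    refine (total_bound p hp0 ρ h4 hρ hρ1 c hc n hn σ h A).trans (le_of_eq ?_)
    rw [pow_mul, one_div_pow]
    norm_num only
    ring
  exact ⟨summable_of_sum_le hnn key, Real.tsum_le_of_sum_le hnn key⟩
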